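/- arXiv:1803.11059 — 3 statements merged into one kernel-verified Lean document; each statement's English description precedes it below -/
import Mathlib

section
/- For an m-dimensional standard Gaussian vector N and α ∈ (0,1), sup over convex sets A ⊆ R^m of E[d(N, ∂A)^{-α}] is at most 1 + 2√(2/π)·m^{3/2}·α/(1-α). -/
open MeasureTheory Real Metric

/-- The standard Gaussian measure on `ℝ^m`, defined via its density with respect to
Lebesgue measure. -/
noncomputable def stdGaussian (m : ℕ) : Measure (EuclideanSpace ℝ (Fin m)) :=
  volume.withDensity
    (fun z => ENNReal.ofReal ((2 * π) ^ (-(m : ℝ) / 2) * Real.exp (-‖z‖ ^ 2 / 2)))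

/-!
By the layer-cake formula it suffices to show that the `r`-neighbourhood of `∂A` has measure at most
a constant times `r`. Up to the null set `∂A`, that neighbourhood lies in the inner collars of width
`r` of two open convex sets, the interior of `A` and the `r`-thickening of `A`. If `x` lies in the
inner collar of a convex set `B`, then one of the `2m` shifts `x ± r √m eᵢ` leaves `B`, since
otherwise `B` contains their convex hull, a cross-polytope, which contains the ball of radius `r`
around `x`. On each line parallel to `eᵢ` the points of `B` sent out of `B` by such a shift form a
set of length at most `r √m`, because `B` meets the line in an interval. The one-dimensional
Gaussian density is at most `1 / √(2π)`, so by Fubini the neighbourhood has measure at most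
`2 · 2m · r √m / √(2π) = 2 √(2/π) m^{3/2} r`.
-/

open scoped NNReal ENNReal

section Convexity

theorem ordConnected_setOf_add_smul_mem {E : Type*} [AddCommGroup E] [Module ℝ E] {B : Set E}
    (hB : Convex ℝ B) (x v : E) : {t : ℝ | x + t • v ∈ B}.OrdConnected := by
  have h : {t : ℝ | x + t • v ∈ B} = AffineMap.lineMap x (x + v) ⁻¹' B := by
    ext t
    simp [AffineMap.lineMap_apply, add_comm]
  rw [h]
  exact (hB.affine_preimage _).ordConnected

theorem volume_setOf_mem_add_notMem_le {I : Set ℝ} (hI : I.OrdConnected) (s : ℝ) :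
    volume {t | t ∈ I ∧ t + s ∉ I} ≤ ENNReal.ofReal |s| := by
  refine (Real.volume_le_diam _).trans (Metric.ediam_le ?_)
  intro a ha b hb
  wlog hab : a ≤ b generalizing a b
  · exact edist_comm a b ▸ this b hb a ha (le_of_not_ge hab)
  rw [edist_dist, dist_comm, Real.dist_eq, abs_of_nonneg (sub_nonneg.2 hab)]
  refine ENNReal.ofReal_le_ofReal ?_
  by_contra! hs
  rcases le_total 0 s with h0 | h0
  · rw [abs_of_nonneg h0] at hs
    exact ha.2 (hI.out ha.1 hb.1 ⟨by linarith, by linarith⟩)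
  · rw [abs_of_nonpos h0] at hs
    exact hb.2 (hI.out ha.1 hb.1 ⟨by linarith, by linarith⟩)

/- Push `x` away from a nearly closest point `a` of `A` by the factor `r / d`, where `d` is the
distance from `x` to `A`: were the image within `r` of `A`, contracting back towards `a` would put
`x` within less than `d` of `A`. -/
theorem compl_closure_subset_thickening_compl_thickening {E : Type*} [NormedAddCommGroup E]
    [NormedSpace ℝ E] {A : Set E} (hA : Convex ℝ A) {r : ℝ} (hr : 0 < r) :
    (closure A)ᶜ ⊆ thickening r (thickening r A)ᶜ := by
  intro x hx
  by_cases hxr : x ∈ thickening r A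
  swap
  · exact self_subset_thickening hr _ hxr
  obtain ⟨a₀, ha₀, -⟩ := mem_thickening_iff.1 hxr
  have hne : A.Nonempty := ⟨a₀, ha₀⟩
  set d := infDist x A
  have hd : 0 < d := (infDist_pos_iff_notMem_closure hne).1 hx
  have hdr : d < r := (mem_thickening_iff_infDist_lt hne).1 hxr
  obtain ⟨a, ha, hxa⟩ : ∃ a ∈ A, dist x a < d * r / (r - d) := by
    refine (infDist_lt_iff hne).1 ?_
    rw [lt_div_iff₀ (sub_pos.2 hdr)]
    nlinarith
  refine mem_thickening_iff.2 ⟨a + (r / d) • (x - a), fun hy => ?_, ?_⟩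
  · obtain ⟨b, hb, hyb⟩ := mem_thickening_iff.1 hy
    have hq : a + (d / r) • (b - a) ∈ A :=
      hA.add_smul_sub_mem ha hb ⟨by positivity, (div_le_one hr).2 hdr.le⟩
    have hxq : x - (a + (d / r) • (b - a)) = (d / r) • (a + (r / d) • (x - a) - b) := by
      match_scalars <;> field_simp
      ring
    refine (infDist_le_dist_of_mem (x := x) hq).not_gt ?_
    rw [dist_eq_norm, hxq, norm_smul, Real.norm_of_nonneg (by positivity), ← dist_eq_norm]
    calc d / r * dist (a + (r / d) • (x - a)) b < d / r * r := by gcongr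
      _ = d := by field_simp
  · have hxy : x - (a + (r / d) • (x - a)) = -(((r - d) / d) • (x - a)) := by
      match_scalars <;> field_simp <;> ring
    have hrd : 0 < r - d := sub_pos.2 hdr
    rw [dist_eq_norm, hxy, norm_neg, norm_smul, Real.norm_of_nonneg (by positivity),
      ← dist_eq_norm]
    calc (r - d) / d * dist x a < (r - d) / d * (d * r / (r - d)) := by gcongr
      _ = r := by field_simp

theorem thickening_frontier_subset {E : Type*} [NormedAddCommGroup E] [NormedSpace ℝ E]
    {A : Set E} (hA : Convex ℝ A) {r : ℝ} (hr : 0 < r) :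
    thickening r (frontier A) ⊆ frontier A ∪ interior A ∩ thickening r (interior A)ᶜ ∪
      thickening r A ∩ thickening r (thickening r A)ᶜ := by
  intro x hx
  by_cases hint : x ∈ interior A
  · exact .inl (.inr ⟨hint, thickening_subset_of_subset r (fun y hy => hy.2) hx⟩)
  by_cases hcl : x ∈ closure A
  · exact .inl (.inl ⟨hcl, hint⟩)
  · have hxr : x ∈ thickening r A := by
      rw [← thickening_closure]
      exact thickening_subset_of_subset r frontier_subset_closure hx
    exact .inr ⟨hxr, compl_closure_subset_thickening_compl_thickening hA hr hcl⟩

variable {ι : Type*} [Fintype ι]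

theorem sum_abs_le_sqrt_card_mul_norm (w : EuclideanSpace ℝ ι) :
    ∑ i, |w i| ≤ √(Fintype.card ι) * ‖w‖ := by
  rw [EuclideanSpace.norm_eq, ← Real.sqrt_mul (Nat.cast_nonneg _)]
  refine Real.le_sqrt_of_sq_le ?_
  exact sq_sum_le_card_mul_sum_sq

variable [DecidableEq ι]

theorem closedBall_subset_of_forall_add_smul_single_mem {B : Set (EuclideanSpace ℝ ι)}
    (hB : Convex ℝ B) {x : EuclideanSpace ℝ ι} {r : ℝ} (hx : x ∈ B)
    (hpos : ∀ i, x + (√(Fintype.card ι) * r) • EuclideanSpace.single i (1 : ℝ) ∈ B)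
    (hneg : ∀ i, x + (-(√(Fintype.card ι) * r)) • EuclideanSpace.single i (1 : ℝ) ∈ B) :
    closedBall x r ⊆ B := by
  intro y hy
  rw [mem_closedBall, dist_eq_norm] at hy
  set w := y - x
  set L := ∑ i, |w i| with hL
  have hLr : L ≤ √(Fintype.card ι) * r :=
    (sum_abs_le_sqrt_card_mul_norm w).trans (by gcongr)
  have hL0 : 0 ≤ L := Finset.sum_nonneg fun i _ => abs_nonneg _
  obtain hL0 | hL0 := hL0.eq_or_lt
  · have hw : w = 0 := by
      ext i
      exact abs_eq_zero.1
        ((Finset.sum_eq_zero_iff_of_nonneg fun j _ => abs_nonneg (w j)).1 hL0.symm i (by simp))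
    rwa [sub_eq_zero.1 hw]
  have hvertex (i : ι) :
      x + (L * SignType.sign (w i)) • EuclideanSpace.single i (1 : ℝ) ∈ B := by
    refine (ordConnected_setOf_add_smul_mem hB x _).out (hneg i) (hpos i) ⟨?_, ?_⟩ <;>
      rcases lt_trichotomy (w i) 0 with h | h | h <;> simp [h] <;> linarith
  have hy_eq : y = ∑ i, (|w i| / L) •
      (x + (L * SignType.sign (w i)) • EuclideanSpace.single i (1 : ℝ)) := by
    simp only [smul_add, Finset.sum_add_distrib, ← Finset.sum_smul, ← Finset.sum_div, ← hL,
      div_self hL0.ne', one_smul, smul_smul]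
    have hcoord (i : ι) : |w i| / L * (L * SignType.sign (w i)) = w i := by
      rw [← mul_assoc, div_mul_cancel₀ _ hL0.ne', abs_mul_sign]
    simp only [hcoord]
    ext j
    simp [w, Pi.single_apply]
  rw [hy_eq]
  refine hB.sum_mem (fun i _ => by positivity) ?_ fun i _ => hvertex i
  rw [← Finset.sum_div, div_self hL0.ne']

theorem inter_thickening_compl_subset_iUnion {B : Set (EuclideanSpace ℝ ι)} (hB : Convex ℝ B)
    (r : ℝ) : B ∩ thickening r Bᶜ ⊆ ⋃ i,
      ({x | x ∈ B ∧ x + (√(Fintype.card ι) * r) • EuclideanSpace.single i (1 : ℝ) ∉ B} ∪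
       {x | x ∈ B ∧ x + (-(√(Fintype.card ι) * r)) • EuclideanSpace.single i (1 : ℝ) ∉ B}) := by
  rintro x ⟨hx, hxr⟩
  obtain ⟨y, hyB, hxy⟩ := mem_thickening_iff.1 hxr
  by_contra! h
  simp only [Set.mem_iUnion, Set.mem_union, Set.mem_ofPred_eq, hx, true_and, not_exists, not_or,
    not_not] at h
  exact hyB (closedBall_subset_of_forall_add_smul_single_mem hB hx (fun i => (h i).1)
    (fun i => (h i).2) (mem_closedBall'.2 hxy.le))

end Convexity

section Product

variable {ι : Type*} [Fintype ι] {X : ι → Type*} [∀ i, MeasurableSpace (X i)]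

theorem measure_pi_le_of_forall_update_le [DecidableEq ι] (μ : ∀ i, Measure (X i))
    [∀ i, IsProbabilityMeasure (μ i)] (i : ι) {S : Set (∀ i, X i)} (hS : MeasurableSet S)
    {c : ℝ≥0∞} (h : ∀ x, μ i {t | Function.update x i t ∈ S} ≤ c) : Measure.pi μ S ≤ c := by
  have hslice : ∫⋯∫⁻_{i}, S.indicator 1 ∂μ ≤ ∫⋯∫⁻_{i}, (fun _ => c) ∂μ := by
    intro x
    have hmeas : MeasurableSet {t | Function.update x i t ∈ S} := measurable_update x hS
    simp only [lmarginal_singleton, lintegral_const, measure_univ, mul_one]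
    exact (lintegral_indicator_one hmeas).trans_le (h x)
  simpa [hS] using
    lintegral_le_of_lmarginal_le {i} (measurable_one.indicator hS) measurable_const hslice

theorem lintegral_pi_prod (μ : ∀ i, Measure (X i)) [∀ i, SigmaFinite (μ i)]
    {f : ∀ i, X i → ℝ≥0∞} (hf : ∀ i, Measurable (f i)) :
    ∫⁻ x, ∏ i, f i (x i) ∂Measure.pi μ = ∏ i, ∫⁻ t, f i t ∂μ i := by
  classical
  have hmarginal (s : Finset ι) : ∫⋯∫⁻_s, (fun x => ∏ i ∈ s, f i (x i)) ∂μ =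
      fun _ => ∏ i ∈ s, ∫⁻ t, f i t ∂μ i := by
    induction s using Finset.induction_on with
    | empty => simp
    | insert i s hi ih =>
      have hsplit (x : ∀ i, X i) :
          ∫⁻ t, ∏ j ∈ insert i s, f j (Function.update x i t j) ∂μ i =
            (∫⁻ t, f i t ∂μ i) * ∏ j ∈ s, f j (x j) := by
        rw [← lintegral_mul_const _ (hf i)]
        refine lintegral_congr fun t => ?_
        rw [Finset.prod_insert hi, Function.update_self]
        congr 1
        refine Finset.prod_congr rfl fun j hj => ?_
        rw [Function.update_of_ne (ne_of_mem_of_not_mem hj hi)]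
      have hprod : Measurable fun x : ∀ i, X i => ∏ j ∈ s, f j (x j) := by fun_prop
      rw [lmarginal_insert' _ (by fun_prop) hi, funext hsplit]
      funext x
      rw [Finset.prod_insert hi, ← congrFun ih x]
      exact lintegral_const_mul _ (hprod.comp measurable_updateFinset)
  rcases isEmpty_or_nonempty (∀ i, X i) with hX | ⟨⟨x⟩⟩
  · obtain ⟨i, hi⟩ := isEmpty_pi.1 hX
    rw [lintegral_of_isEmpty, Finset.prod_eq_zero (Finset.mem_univ i) (lintegral_of_isEmpty _ _)]
  · rw [lintegral_eq_lmarginal_univ x, hmarginal]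

theorem pi_withDensity (μ : ∀ i, Measure (X i)) [∀ i, SigmaFinite (μ i)]
    {f : ∀ i, X i → ℝ≥0∞} (hf : ∀ i, Measurable (f i))
    [∀ i, SigmaFinite ((μ i).withDensity (f i))] :
    Measure.pi (fun i => (μ i).withDensity (f i)) =
      (Measure.pi μ).withDensity fun x => ∏ i, f i (x i) := by
  refine Measure.pi_eq fun s hs => ?_
  rw [withDensity_apply _ (.univ_pi hs), Measure.restrict_pi_pi, lintegral_pi_prod _ hf]
  exact Finset.prod_congr rfl fun i _ => (withDensity_apply _ (hs i)).symm

theorem pi_absolutelyContinuous {μ ν : ∀ i, Measure (X i)} [∀ i, SigmaFinite (μ i)]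
    [∀ i, SigmaFinite (ν i)] (h : ∀ i, μ i ≪ ν i) : Measure.pi μ ≪ Measure.pi ν := by
  have hdens (i : ι) : (ν i).withDensity ((μ i).rnDeriv (ν i)) = μ i :=
    Measure.withDensity_rnDeriv_eq _ _ (h i)
  have (i : ι) : SigmaFinite ((ν i).withDensity ((μ i).rnDeriv (ν i))) := by
    rw [hdens]; infer_instance
  rw [← funext hdens, pi_withDensity ν fun i => Measure.measurable_rnDeriv _ _]
  exact withDensity_absolutelyContinuous _ _

end Product

section BoundedDensity

variable {ι : Type*} [Fintype ι] {ν : ι → Measure ℝ}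

theorem map_toLp_pi_absolutelyContinuous [∀ i, SigmaFinite (ν i)] (hν : ∀ i, ν i ≪ volume) :
    (Measure.pi ν).map (WithLp.toLp 2) ≪ (volume : Measure (EuclideanSpace ℝ ι)) := by
  rw [← (PiLp.volume_preserving_toLp ι).map_eq]
  exact (pi_absolutelyContinuous hν).map (WithLp.measurable_toLp 2 _)

variable [∀ i, IsProbabilityMeasure (ν i)] {c : ℝ≥0}

theorem map_toLp_pi_setOf_mem_add_notMem_le [DecidableEq ι] (hν : ∀ i, ν i ≤ c • volume)
    {B : Set (EuclideanSpace ℝ ι)} (hB : Convex ℝ B) (hBm : MeasurableSet B) (i : ι) (s : ℝ) :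
    (Measure.pi ν).map (WithLp.toLp 2)
        {x | x ∈ B ∧ x + s • EuclideanSpace.single i (1 : ℝ) ∉ B} ≤
      c * ENNReal.ofReal |s| := by
  have hS : MeasurableSet {x | x ∈ B ∧ x + s • EuclideanSpace.single i (1 : ℝ) ∉ B} :=
    hBm.inter (measurable_add_const _ hBm.compl)
  rw [Measure.map_apply (WithLp.measurable_toLp 2 _) hS]
  refine measure_pi_le_of_forall_update_le ν i (WithLp.measurable_toLp 2 _ hS) fun x => ?_
  set e : EuclideanSpace ℝ ι := EuclideanSpace.single i 1
  obtain ⟨p, hline⟩ : ∃ p, ∀ t : ℝ, WithLp.toLp 2 (Function.update x i t) = p + t • e := by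
    refine ⟨WithLp.toLp 2 (Function.update x i 0), fun t => ?_⟩
    ext j
    obtain rfl | hj := eq_or_ne j i <;> simp [e, *]
  simp only [Set.mem_preimage, Set.mem_ofPred_eq, hline, add_assoc, ← add_smul]
  refine (hν i _).trans ?_
  rw [Measure.smul_apply, ENNReal.smul_def, smul_eq_mul]
  gcongr
  exact volume_setOf_mem_add_notMem_le (ordConnected_setOf_add_smul_mem hB _ e) s

theorem map_toLp_pi_inter_thickening_compl_le (hν : ∀ i, ν i ≤ c • volume)
    {B : Set (EuclideanSpace ℝ ι)} (hB : Convex ℝ B) (hBm : MeasurableSet B) {r : ℝ}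
    (hr : 0 ≤ r) :
    (Measure.pi ν).map (WithLp.toLp 2) (B ∩ thickening r Bᶜ) ≤
      ENNReal.ofReal (2 * c * (Fintype.card ι : ℝ) ^ ((3 : ℝ) / 2) * r) := by
  classical
  set n : ℝ := (Fintype.card ι : ℝ)
  have hexit (i : ι) (s : ℝ) (hs : |s| = √n * r) :=
    hs ▸ map_toLp_pi_setOf_mem_add_notMem_le hν hB hBm i s
  have hn : n * √n = n ^ ((3 : ℝ) / 2) := by
    rw [show (3 : ℝ) / 2 = 1 + 1 / 2 by norm_num,
      Real.rpow_add_of_nonneg (by positivity) (by norm_num) (by norm_num), Real.rpow_one,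
      Real.sqrt_eq_rpow]
  have hs : |√n * r| = √n * r := abs_of_nonneg (by positivity)
  calc (Measure.pi ν).map (WithLp.toLp 2) (B ∩ thickening r Bᶜ)
      ≤ ∑ _i : ι, (c * ENNReal.ofReal (√n * r) + c * ENNReal.ofReal (√n * r)) :=
        (measure_mono (inter_thickening_compl_subset_iUnion hB r)).trans <|
          (measure_iUnion_fintype_le _ _).trans <| Finset.sum_le_sum fun i _ =>
            (measure_union_le _ _).trans <|
              add_le_add (hexit i _ hs) (hexit i _ ((abs_neg _).trans hs))
    _ = ENNReal.ofReal (n * (2 * (c * (√n * r)))) := by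
        rw [Finset.sum_const, Finset.card_univ, nsmul_eq_mul, ← two_mul,
          ENNReal.ofReal_mul (p := n) (by positivity), ENNReal.ofReal_mul zero_le_two,
          ENNReal.ofReal_mul c.coe_nonneg, ENNReal.ofReal_coe_nnreal, ENNReal.ofReal_ofNat,
          ENNReal.ofReal_natCast]
    _ = ENNReal.ofReal (2 * c * n ^ ((3 : ℝ) / 2) * r) := by
        rw [← hn]
        ring_nf

theorem map_toLp_pi_thickening_frontier_le (hν : ∀ i, ν i ≤ c • volume)
    {A : Set (EuclideanSpace ℝ ι)} (hA : Convex ℝ A) {r : ℝ} (hr : 0 < r) :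
    (Measure.pi ν).map (WithLp.toLp 2) (thickening r (frontier A)) ≤
      ENNReal.ofReal (4 * c * (Fintype.card ι : ℝ) ^ ((3 : ℝ) / 2) * r) := by
  have hfrontier : (Measure.pi ν).map (WithLp.toLp 2) (frontier A) = 0 :=
    map_toLp_pi_absolutelyContinuous (fun i => (hν i).absolutelyContinuous.trans
      Measure.smul_absolutelyContinuous) (hA.addHaar_frontier volume)
  have hinner := map_toLp_pi_inter_thickening_compl_le hν hA.interior
    isOpen_interior.measurableSet hr.le
  have houter := map_toLp_pi_inter_thickening_compl_le hν (hA.thickening r)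
    isOpen_thickening.measurableSet hr.le
  refine (measure_mono (thickening_frontier_subset hA hr)).trans <|
    (measure_union_le _ _).trans <|
      (add_le_add ((measure_union_le _ _).trans (add_le_add hfrontier.le hinner)) houter).trans ?_
  rw [zero_add, ← ENNReal.ofReal_add (by positivity) (by positivity)]
  exact ENNReal.ofReal_le_ofReal (by linarith)

end BoundedDensity

section NegativeMoment

theorem lintegral_Ioi_one_ofReal_mul_rpow {C p : ℝ} (hC : 0 ≤ C) (hp : p < -1) :
    ∫⁻ t in Set.Ioi 1, ENNReal.ofReal (C * t ^ p) = ENNReal.ofReal (C * (-1 / (p + 1))) := by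
  rw [← ofReal_integral_eq_lintegral_ofReal, integral_const_mul,
    integral_Ioi_rpow_of_lt hp zero_lt_one, Real.one_rpow]
  · exact (integrableOn_Ioi_rpow_of_lt hp zero_lt_one).const_mul C
  · filter_upwards [ae_restrict_mem measurableSet_Ioi] with t ht
    have ht0 : 0 < t := zero_lt_one.trans ht
    positivity

theorem lintegral_rpow_neg_le_of_measure_lt_le {Ω : Type*} [MeasurableSpace Ω] {μ : Measure Ω}
    [IsProbabilityMeasure μ] {f : Ω → ℝ} (hf : AEMeasurable f μ) (hf0 : ∀ x, 0 ≤ f x) {C : ℝ}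
    (hC : 0 ≤ C) (h : ∀ r, 0 < r → μ {x | f x < r} ≤ ENNReal.ofReal (C * r)) {α : ℝ}
    (hα0 : 0 < α) (hα1 : α < 1) :
    ∫⁻ x, ENNReal.ofReal (f x ^ (-α)) ∂μ ≤ ENNReal.ofReal (1 + C * α / (1 - α)) := by
  have hp : (-α)⁻¹ < -1 := by
    rw [inv_neg]
    exact neg_lt_neg ((one_lt_inv₀ hα0).2 hα1)
  have htail (t : ℝ) (ht : t ∈ Set.Ioi 1) :
      μ {x | t < f x ^ (-α)} ≤ ENNReal.ofReal (C * t ^ (-α)⁻¹) := by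
    have ht0 : 0 < t := zero_lt_one.trans ht
    refine (measure_mono fun x hx => ?_).trans (h _ (Real.rpow_pos_of_pos ht0 _))
    obtain hx0 | hx0 := (hf0 x).eq_or_lt
    · exact hx0.ge.trans_lt (Real.rpow_pos_of_pos ht0 _)
    · exact (Real.lt_rpow_inv_iff_of_neg hx0 ht0 (neg_neg_of_pos hα0)).2 hx
  have hconst : C * (-1 / ((-α)⁻¹ + 1)) = C * α / (1 - α) := by
    have h1 : 1 - α ≠ 0 := by linarith
    have h2 : (-α)⁻¹ + 1 ≠ 0 := by linarith
    rw [mul_div_assoc C α, mul_eq_mul_left_iff, div_eq_div_iff h2 h1]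
    left
    field_simp
    ring
  calc ∫⁻ x, ENNReal.ofReal (f x ^ (-α)) ∂μ
      = ∫⁻ t in Set.Ioi 0, μ {x | t < f x ^ (-α)} :=
        lintegral_eq_lintegral_meas_lt μ (ae_of_all _ fun x => Real.rpow_nonneg (hf0 x) _)
          (hf.pow_const _)
    _ = (∫⁻ t in Set.Ioc 0 1, μ {x | t < f x ^ (-α)}) +
          ∫⁻ t in Set.Ioi 1, μ {x | t < f x ^ (-α)} := by
        rw [← Set.Ioc_union_Ioi_eq_Ioi (zero_le_one' ℝ),
          lintegral_union measurableSet_Ioi (Set.Ioc_disjoint_Ioi le_rfl)]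
    _ ≤ (∫⁻ _ in Set.Ioc (0 : ℝ) 1, 1) +
          ∫⁻ t in Set.Ioi 1, ENNReal.ofReal (C * t ^ (-α)⁻¹) :=
        add_le_add (lintegral_mono fun _ => prob_le_one) (setLIntegral_mono (by fun_prop) htail)
    _ = ENNReal.ofReal (1 + C * α / (1 - α)) := by
        rw [lintegral_Ioi_one_ofReal_mul_rpow hC hp, hconst, ENNReal.ofReal_add zero_le_one
          (div_nonneg (by positivity) (by linarith))]
        simp

end NegativeMoment

section Gaussian

open ProbabilityTheory hiding stdGaussian

theorem gaussianReal_le_smul_volume (μ : ℝ) {v : ℝ≥0} (hv : v ≠ 0) :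
    gaussianReal μ v ≤ (√(2 * π * v))⁻¹.toNNReal • volume := by
  have hpdf (x : ℝ) : gaussianPDF μ v x ≤ ((√(2 * π * v))⁻¹.toNNReal : ℝ≥0∞) :=
    ENNReal.ofReal_le_ofReal <| mul_le_of_le_one_right (by positivity) <|
      Real.exp_le_one_iff.2 <| div_nonpos_of_nonpos_of_nonneg (by simp [sq_nonneg]) (by positivity)
  rw [gaussianReal_of_var_ne_zero _ hv]
  exact (withDensity_mono (ae_of_all _ hpdf)).trans_eq (withDensity_const _)

theorem prod_gaussianPDFReal_eq_rpow_mul_exp {ι : Type*} [Fintype ι] (x : EuclideanSpace ℝ ι) :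
    ∏ i, gaussianPDFReal 0 1 (x i) =
      (2 * π) ^ (-(Fintype.card ι : ℝ) / 2) * Real.exp (-‖x‖ ^ 2 / 2) := by
  have hconst : (√(2 * π))⁻¹ ^ Fintype.card ι = (2 * π) ^ (-(Fintype.card ι : ℝ) / 2) := by
    rw [Real.sqrt_eq_rpow, ← Real.rpow_neg (by positivity), ← Real.rpow_mul_natCast (by positivity)]
    ring_nf
  simp only [gaussianPDFReal, NNReal.coe_one, mul_one, sub_zero, Finset.prod_mul_distrib,
    Finset.prod_const, Finset.card_univ, hconst, ← Real.exp_sum, ← Finset.sum_div,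
    Finset.sum_neg_distrib, EuclideanSpace.real_norm_sq_eq]

theorem stdGaussian_eq_map_toLp_pi (m : ℕ) :
    stdGaussian m = (Measure.pi fun _ : Fin m => gaussianReal 0 1).map (WithLp.toLp 2) := by
  have hpi : (Measure.pi fun _ : Fin m => gaussianReal 0 1) =
      volume.withDensity fun x => ∏ i, gaussianPDF 0 1 (x i) := by
    have : SigmaFinite ((volume : Measure ℝ).withDensity (gaussianPDF 0 1)) :=
      gaussianReal_of_var_ne_zero 0 one_ne_zero ▸ inferInstance
    rw [gaussianReal_of_var_ne_zero 0 one_ne_zero, volume_pi]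
    exact pi_withDensity _ fun _ => measurable_gaussianPDF 0 1
  have hdens (x : Fin m → ℝ) : ∏ i, gaussianPDF 0 1 (x i) =
      ENNReal.ofReal ((2 * π) ^ (-(m : ℝ) / 2) * Real.exp (-‖WithLp.toLp 2 x‖ ^ 2 / 2)) := by
    have h := prod_gaussianPDFReal_eq_rpow_mul_exp (WithLp.toLp 2 x)
    rw [Fintype.card_fin] at h
    rw [← h, ENNReal.ofReal_prod_of_nonneg fun i _ => gaussianPDFReal_nonneg 0 1 _]
    rfl
  refine Measure.ext fun s hs => ?_
  rw [hpi, Measure.map_apply (WithLp.measurable_toLp 2 _) hs, stdGaussian,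
    withDensity_apply _ hs, withDensity_apply _ (WithLp.measurable_toLp 2 _ hs)]
  simp only [hdens]
  exact ((PiLp.volume_preserving_toLp (Fin m)).setLIntegral_comp_preimage hs (by fun_prop)).symm

theorem two_mul_sqrt_two_div_pi_eq : 2 * √(2 / π) = 4 * (√(2 * π))⁻¹ := by
  rw [show 2 / π = 2 ^ 2 / (2 * π) by field_simp, Real.sqrt_div (by positivity),
    Real.sqrt_sq zero_le_two]
  ring

end Gaussian

theorem stmt7_general {ι : Type*} [Fintype ι] {ν : ι → Measure ℝ}
    [∀ i, IsProbabilityMeasure (ν i)] {c : ℝ≥0} (hν : ∀ i, ν i ≤ c • volume) {α : ℝ}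
    (hα0 : 0 < α) (hα1 : α < 1) {A : Set (EuclideanSpace ℝ ι)} (hA : Convex ℝ A) :
    ∫⁻ x, ENNReal.ofReal (infDist x (frontier A) ^ (-α)) ∂(Measure.pi ν).map (WithLp.toLp 2) ≤
      ENNReal.ofReal (1 + 4 * c * (Fintype.card ι : ℝ) ^ ((3 : ℝ) / 2) * α / (1 - α)) := by
  have : IsProbabilityMeasure ((Measure.pi ν).map (WithLp.toLp 2 : _ → EuclideanSpace ℝ ι)) :=
    Measure.isProbabilityMeasure_map (by fun_prop)
  rcases (frontier A).eq_empty_or_nonempty with hempty | hne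
  · -- `infDist` to the empty set is `0`, and `0 ^ (-α) = 0`
    simp [hempty, Real.zero_rpow (neg_ne_zero.2 hα0.ne')]
  refine lintegral_rpow_neg_le_of_measure_lt_le measurable_infDist.aemeasurable
    (fun _ => infDist_nonneg) (by positivity) (fun r hr => ?_) hα0 hα1
  have hset : {x | infDist x (frontier A) < r} = thickening r (frontier A) :=
    Set.ext fun _ => (mem_thickening_iff_infDist_lt hne).symm
  exact hset ▸ map_toLp_pi_thickening_frontier_le hν hA hr

/-- For an `m`-dimensional standard Gaussian vector `N` and `α ∈ (0,1)`, for every convex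
set `A ⊆ ℝ^m` one has `E[d(N, ∂A)^{-α}] ≤ 1 + 2√(2/π) m^{3/2} α/(1-α)`. -/
theorem stmt7 (m : ℕ) (α : ℝ) (hα0 : 0 < α) (hα1 : α < 1)
    (A : Set (EuclideanSpace ℝ (Fin m))) (hA : Convex ℝ A) :
    (∫⁻ x, ENNReal.ofReal ((infDist x (frontier A)) ^ (-α)) ∂(stdGaussian m)) ≤
      ENNReal.ofReal (1 + 2 * Real.sqrt (2 / π) * (m : ℝ) ^ ((3 : ℝ) / 2) * α / (1 - α)) := by
  rw [stdGaussian_eq_map_toLp_pi, two_mul_sqrt_two_div_pi_eq]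
  simpa using stmt7_general (fun _ => gaussianReal_le_smul_volume 0 one_ne_zero) hα0 hα1 hA
end

section
/- Define M_3 := ∫_{R^m} ( Σ_{i,j,k=1}^m (∂³φ_I/∂y_i∂y_j∂y_k (z))² )^{1/2} dz, where φ_I is the standard Gaussian density on R^m. Then M_3 ≤ √6 · m^{3/2}. -/
open MeasureTheory Real

/-- The standard Gaussian density on `ℝ^m`. -/
noncomputable def stdGaussianDensityE (m : ℕ) : EuclideanSpace ℝ (Fin m) → ℝ :=
  fun z => (2 * π) ^ (-(m : ℝ) / 2) * Real.exp (-‖z‖ ^ 2 / 2)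

/-!
The third derivative of the Gaussian density `φ` at `z` is `H(z) φ(z)` with `H(z)` the negated
cubic Hermite tensor, whose Hilbert-Schmidt norm is radial:
`‖H(z)‖² = ‖z‖⁶ - 6 ‖z‖⁴ + 3 (n + 2) ‖z‖²` in dimension `n`. The Cauchy-Schwarz inequality for the
probability density `φ` bounds the integral of `‖H‖ φ` by `(∫ ‖H‖² φ)^(1/2)`. The radial moments
`n`, `n (n + 2)`, `n (n + 2) (n + 4)` of `φ` then give `∫ ‖H‖² φ = n (n + 1) (n + 2) ≤ 6 n³`.
-/

open Set Module
open scoped RealInnerProductSpace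

section CauchySchwarz

variable {α : Type*} [MeasurableSpace α] {μ : Measure α} {f g w : α → ℝ}

theorem integral_sqrt_mul_sqrt_le (hf₀ : 0 ≤ f) (hg₀ : 0 ≤ g) (hf : Integrable f μ)
    (hg : Integrable g μ) :
    ∫ x, √(f x) * √(g x) ∂μ ≤ √(∫ x, f x ∂μ) * √(∫ x, g x ∂μ) := by
  have memLp_sqrt {h : α → ℝ} (h₀ : 0 ≤ h) (hh : Integrable h μ) :
      MemLp (fun x => √(h x)) (ENNReal.ofReal 2) μ := by
    rw [ENNReal.ofReal_ofNat, memLp_two_iff_integrable_sq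
      (continuous_sqrt.comp_aestronglyMeasurable hh.aestronglyMeasurable)]
    simpa only [sq_sqrt (h₀ _)] using hh
  have cauchy_schwarz := integral_mul_le_Lp_mul_Lq_of_nonneg HolderConjugate.two_two
    (.of_forall fun x => sqrt_nonneg (f x)) (.of_forall fun x => sqrt_nonneg (g x))
    (memLp_sqrt hf₀ hf) (memLp_sqrt hg₀ hg)
  simpa only [rpow_two, sq_sqrt (hf₀ _), sq_sqrt (hg₀ _), ← sqrt_eq_rpow] using cauchy_schwarz

theorem integral_sqrt_mul_le_sqrt_integral_mul (hf₀ : 0 ≤ f) (hw₀ : 0 ≤ w)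
    (hfw : Integrable (fun x => f x * w x) μ) (hw : Integrable w μ) (hw₁ : ∫ x, w x ∂μ = 1) :
    ∫ x, √(f x) * w x ∂μ ≤ √(∫ x, f x * w x ∂μ) :=
  calc ∫ x, √(f x) * w x ∂μ
    _ = ∫ x, √(f x * w x) * √(w x) ∂μ := by
      simp only [sqrt_mul (hf₀ _), mul_assoc, mul_self_sqrt (hw₀ _)]
    _ ≤ √(∫ x, f x * w x ∂μ) * √(∫ x, w x ∂μ) :=
      integral_sqrt_mul_sqrt_le (fun x => mul_nonneg (hf₀ x) (hw₀ x)) hw₀ hfw hw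
    _ = √(∫ x, f x * w x ∂μ) := by rw [hw₁, sqrt_one, mul_one]

end CauchySchwarz

section RadialMoments

theorem integral_rpow_add_two_mul_exp_neg_mul_sq {b q : ℝ} (hb : 0 < b) (hq : -1 < q) :
    ∫ y in Ioi (0 : ℝ), y ^ (q + 2) * exp (-b * y ^ 2) =
      (q + 1) / (2 * b) * ∫ y in Ioi (0 : ℝ), y ^ q * exp (-b * y ^ 2) := by
  simp only [← rpow_two]
  rw [integral_rpow_mul_exp_neg_mul_rpow two_pos (by linarith) hb,
    integral_rpow_mul_exp_neg_mul_rpow two_pos hq hb,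
    show (q + 2 + 1) / 2 = (q + 1) / 2 + 1 by ring,
    show -(q + 2 + 1) / 2 = -(q + 1) / 2 - 1 by ring,
    Gamma_add_one (by linarith), rpow_sub_one hb.ne']
  field_simp

variable {V : Type*} [NormedAddCommGroup V] [InnerProductSpace ℝ V] [FiniteDimensional ℝ V]
  [MeasurableSpace V] [BorelSpace V] {b : ℝ}

theorem integrable_norm_pow_mul_exp_neg_mul_sq_norm (hb : 0 < b) (k : ℕ) :
    Integrable fun z : V => ‖z‖ ^ k * exp (-b * ‖z‖ ^ 2) := by
  rcases subsingleton_or_nontrivial V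
  · exact .of_finite
  rw [integrable_fun_norm_addHaar volume (f := fun y => y ^ k * exp (-b * y ^ 2))]
  have hq : (-1 : ℝ) < (finrank ℝ V - 1 + k : ℕ) :=
    neg_one_lt_zero.trans_le (Nat.cast_nonneg _)
  simpa only [rpow_natCast, pow_add, mul_assoc, smul_eq_mul]
    using integrableOn_rpow_mul_exp_neg_mul_sq hb hq

theorem integral_norm_pow_add_two_mul_exp_neg_mul_sq_norm (hb : 0 < b) (k : ℕ) :
    ∫ z : V, ‖z‖ ^ (k + 2) * exp (-b * ‖z‖ ^ 2) =
      (finrank ℝ V + k) / (2 * b) * ∫ z : V, ‖z‖ ^ k * exp (-b * ‖z‖ ^ 2) := by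
  rcases subsingleton_or_nontrivial V
  · obtain rfl | hk := eq_or_ne k 0
    · simp [Subsingleton.elim _ (0 : V), finrank_zero_of_subsingleton (R := ℝ) (M := V)]
    · simp [Subsingleton.elim _ (0 : V), hk]
  obtain ⟨d, hd⟩ : ∃ d, finrank ℝ V = d + 1 := Nat.exists_eq_succ_of_ne_zero finrank_pos.ne'
  have radial (j : ℕ) : ∫ z : V, ‖z‖ ^ j * exp (-b * ‖z‖ ^ 2) =
      (d + 1) * volume.real (Metric.ball (0 : V) 1) *
        ∫ y in Ioi (0 : ℝ), y ^ ((d + j : ℕ) : ℝ) * exp (-b * y ^ 2) := by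
    rw [integral_fun_norm_addHaar volume (f := fun y => y ^ j * exp (-b * y ^ 2)), hd]
    simp only [rpow_natCast, smul_eq_mul, nsmul_eq_mul, Nat.add_sub_cancel, Nat.cast_succ]
    simp only [pow_add, mul_assoc]
  have hq : (-1 : ℝ) < (d + k : ℕ) := neg_one_lt_zero.trans_le (Nat.cast_nonneg _)
  have half_line := integral_rpow_add_two_mul_exp_neg_mul_sq hb hq
  rw [radial, radial, ← add_assoc, Nat.cast_add _ 2, Nat.cast_ofNat, half_line, hd]
  push_cast
  ring

end RadialMoments

section GaussianDensity

variable {V : Type*} [NormedAddCommGroup V] [InnerProductSpace ℝ V]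

/-- The density of the standard Gaussian distribution on a finite-dimensional real inner product
space, with respect to the volume for which unit cubes have volume one. -/
noncomputable def gaussianDensity (z : V) : ℝ :=
  (2 * π) ^ (-(finrank ℝ V : ℝ) / 2) * exp (-‖z‖ ^ 2 / 2)

theorem gaussianDensity_nonneg (z : V) : 0 ≤ gaussianDensity z := by
  unfold gaussianDensity
  positivity

theorem gaussianDensity_eq_mul_exp_neg_mul (z : V) :
    gaussianDensity z = (2 * π) ^ (-(finrank ℝ V : ℝ) / 2) * exp (-(1 / 2) * ‖z‖ ^ 2) := by
  rw [gaussianDensity]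
  ring_nf

section Moments

variable [FiniteDimensional ℝ V] [MeasurableSpace V] [BorelSpace V]

theorem integral_gaussianDensity : ∫ z : V, gaussianDensity z = 1 := by
  simp only [gaussianDensity_eq_mul_exp_neg_mul, integral_const_mul]
  rw [GaussianFourier.integral_rexp_neg_mul_sq_norm (by norm_num), div_div_eq_mul_div, div_one,
    mul_comm π, ← rpow_add (by positivity), neg_div, neg_add_cancel, rpow_zero]

theorem integrable_norm_pow_mul_gaussianDensity (k : ℕ) :
    Integrable fun z : V => ‖z‖ ^ k * gaussianDensity z := by
  simp only [gaussianDensity_eq_mul_exp_neg_mul, mul_left_comm (‖_‖ ^ k)]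
  exact (integrable_norm_pow_mul_exp_neg_mul_sq_norm (by norm_num) k).const_mul _

theorem integrable_gaussianDensity : Integrable (gaussianDensity : V → ℝ) := by
  simpa only [pow_zero, one_mul] using integrable_norm_pow_mul_gaussianDensity (V := V) 0

theorem integral_norm_pow_add_two_mul_gaussianDensity (k : ℕ) :
    ∫ z : V, ‖z‖ ^ (k + 2) * gaussianDensity z =
      (finrank ℝ V + k) * ∫ z : V, ‖z‖ ^ k * gaussianDensity z := by
  simp only [gaussianDensity_eq_mul_exp_neg_mul, mul_left_comm (‖_‖ ^ _), integral_const_mul]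
  rw [integral_norm_pow_add_two_mul_exp_neg_mul_sq_norm (by norm_num)]
  ring

theorem integral_norm_sq_mul_gaussianDensity :
    ∫ z : V, ‖z‖ ^ 2 * gaussianDensity z = finrank ℝ V := by
  simpa [integral_gaussianDensity] using integral_norm_pow_add_two_mul_gaussianDensity (V := V) 0

theorem integral_norm_pow_four_mul_gaussianDensity :
    ∫ z : V, ‖z‖ ^ 4 * gaussianDensity z = (finrank ℝ V + 2) * finrank ℝ V := by
  rw [integral_norm_pow_add_two_mul_gaussianDensity 2, integral_norm_sq_mul_gaussianDensity,
    Nat.cast_ofNat]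

theorem integral_norm_pow_six_mul_gaussianDensity :
    ∫ z : V, ‖z‖ ^ 6 * gaussianDensity z =
      (finrank ℝ V + 4) * ((finrank ℝ V + 2) * finrank ℝ V) := by
  rw [integral_norm_pow_add_two_mul_gaussianDensity 4, integral_norm_pow_four_mul_gaussianDensity,
    Nat.cast_ofNat]

end Moments

section Derivatives

theorem hasFDerivAt_gaussianDensity (z : V) :
    HasFDerivAt gaussianDensity (-gaussianDensity z • innerSL ℝ z) z := by
  have exponent : HasFDerivAt (fun y : V => -‖y‖ ^ 2 / 2) (-innerSL ℝ z) z := by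
    refine ((hasStrictFDerivAt_norm_sq z).hasFDerivAt.neg.mul_const (2⁻¹ : ℝ)).congr_fderiv ?_
    ext v
    simp
  refine (exponent.exp.const_mul _).congr_fderiv ?_
  rw [gaussianDensity, smul_neg, smul_neg, neg_smul, smul_smul]

theorem fderiv_gaussianDensity_apply (z u : V) :
    fderiv ℝ gaussianDensity z u = -⟪u, z⟫ * gaussianDensity z := by
  rw [(hasFDerivAt_gaussianDensity z).fderiv]
  simp only [smul_apply, smul_eq_mul, innerSL_apply_apply, real_inner_comm u z]
  ring

theorem fderiv_mul_gaussianDensity_apply {p : V → ℝ} {p' : V →L[ℝ] ℝ} {z : V}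
    (hp : HasFDerivAt p p' z) (v : V) :
    fderiv ℝ (fun y => p y * gaussianDensity y) z v =
      (p' v - p z * ⟪v, z⟫) * gaussianDensity z := by
  rw [(hp.fun_mul (hasFDerivAt_gaussianDensity z)).fderiv]
  simp only [add_apply, smul_apply, smul_eq_mul, innerSL_apply_apply, real_inner_comm v z]
  ring

theorem fderiv_fderiv_gaussianDensity_apply (z u v : V) :
    fderiv ℝ (fun y => fderiv ℝ gaussianDensity y u) z v =
      (⟪u, z⟫ * ⟪v, z⟫ - ⟪u, v⟫) * gaussianDensity z := by
  simp only [fderiv_gaussianDensity_apply]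
  have deriv_factor : HasFDerivAt (fun y => -⟪u, y⟫) (-innerSL ℝ u) z :=
    (innerSL ℝ u).hasFDerivAt.fun_neg
  rw [fderiv_mul_gaussianDensity_apply deriv_factor]
  simp only [neg_apply, innerSL_apply_apply]
  ring

/-- The negated cubic Hermite polynomial at `z`, as a trilinear form in `u`, `v`, `w`. The sign is
chosen such that its product with the Gaussian density is the third derivative of the density. -/
def negHermiteCubic (z u v w : V) : ℝ :=
  ⟪u, w⟫ * ⟪v, z⟫ + ⟪v, w⟫ * ⟪u, z⟫ + ⟪u, v⟫ * ⟪w, z⟫ - ⟪u, z⟫ * ⟪v, z⟫ * ⟪w, z⟫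

theorem fderiv_fderiv_fderiv_gaussianDensity_apply (z u v w : V) :
    fderiv ℝ (fun y => fderiv ℝ (fun y' => fderiv ℝ gaussianDensity y' u) y v) z w =
      negHermiteCubic z u v w * gaussianDensity z := by
  simp only [fderiv_fderiv_gaussianDensity_apply]
  have deriv_factor : HasFDerivAt (fun y => ⟪u, y⟫ * ⟪v, y⟫ - ⟪u, v⟫)
      (⟪u, z⟫ • innerSL ℝ v + ⟪v, z⟫ • innerSL ℝ u) z :=
    ((innerSL ℝ u).hasFDerivAt.fun_mul (innerSL ℝ v).hasFDerivAt).sub_const _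
  rw [fderiv_mul_gaussianDensity_apply deriv_factor]
  simp only [negHermiteCubic, add_apply, smul_apply, smul_eq_mul, innerSL_apply_apply]
  ring

end Derivatives

end GaussianDensity

section HermiteNorm

variable {ι : Type*} [Fintype ι]

section CommRing

variable [DecidableEq ι] {R : Type*} [CommRing R] (x : ι → R)

theorem sum_sq_ite_mul_add_ite_mul_add_mul (i j : ι) (a b c : R) :
    ∑ k, ((if i = k then 1 else 0) * a + (if j = k then 1 else 0) * b + c * x k) ^ 2 =
      a ^ 2 + b ^ 2 + 2 * (if i = j then a * b else 0) + 2 * c * (a * x i + b * x j)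
        + c ^ 2 * ∑ k, x k ^ 2 := by
  have expand (k : ι) :
      ((if i = k then 1 else 0) * a + (if j = k then 1 else 0) * b + c * x k) ^ 2 =
        (if i = k then a ^ 2 + 2 * (if k = j then a * b else 0) + 2 * c * a * x k else 0)
          + (if j = k then b ^ 2 + 2 * c * b * x k else 0) + c ^ 2 * x k ^ 2 := by
    simp only [@eq_comm _ k j]
    split_ifs <;> ring
  simp only [expand, Finset.sum_add_distrib, Finset.sum_ite_eq, Finset.mem_univ, if_true,
    Finset.mul_sum]
  ring

theorem sum_sum_sum_sq_ite_mul_sub_mul_mul :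
    ∑ i, ∑ j, ∑ k, ((if i = k then 1 else 0) * x j + (if j = k then 1 else 0) * x i
        + (if i = j then 1 else 0) * x k - x i * x j * x k) ^ 2 =
      (∑ i, x i ^ 2) ^ 3 - 6 * (∑ i, x i ^ 2) ^ 2
        + 3 * (Fintype.card ι + 2) * ∑ i, x i ^ 2 := by
  set r := ∑ i, x i ^ 2 with hr
  have sum_last (i j : ι) :
      ∑ k, ((if i = k then 1 else 0) * x j + (if j = k then 1 else 0) * x i
        + (if i = j then 1 else 0) * x k - x i * x j * x k) ^ 2 =
      x i ^ 2 + x j ^ 2 + (r - 4) * (x i ^ 2 * x j ^ 2)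
        + (if i = j then r + (6 - 2 * r) * x i ^ 2 else 0) := by
    -- The summand is `δᵢₖ xⱼ + δⱼₖ xᵢ + (δᵢⱼ - xᵢ xⱼ) xₖ`, squared.
    simp only [add_sub_assoc, ← sub_mul, sum_sq_ite_mul_add_ite_mul_add_mul, ← hr]
    split_ifs with hij
    · rw [hij]
      ring
    · ring
  simp only [sum_last, Finset.sum_add_distrib, Finset.sum_ite_eq, Finset.mem_univ, if_true,
    Finset.sum_const, Finset.card_univ, nsmul_eq_mul, ← Finset.mul_sum, ← Finset.sum_mul, ← hr]
  ring

end CommRing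

variable {V : Type*} [NormedAddCommGroup V] [InnerProductSpace ℝ V]

theorem sum_sq_negHermiteCubic (b : OrthonormalBasis ι ℝ V) (z : V) :
    ∑ i, ∑ j, ∑ k, negHermiteCubic z (b i) (b j) (b k) ^ 2 =
      ‖z‖ ^ 6 - 6 * ‖z‖ ^ 4 + 3 * (Fintype.card ι + 2) * ‖z‖ ^ 2 := by
  classical
  simp only [negHermiteCubic, b.inner_eq_ite]
  rw [sum_sum_sum_sq_ite_mul_sub_mul_mul, b.sum_sq_inner_right, ← pow_mul, ← pow_mul]

variable [FiniteDimensional ℝ V] [MeasurableSpace V] [BorelSpace V]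

theorem integrable_sum_sq_negHermiteCubic_mul_gaussianDensity (b : OrthonormalBasis ι ℝ V) :
    Integrable fun z =>
      (∑ i, ∑ j, ∑ k, negHermiteCubic z (b i) (b j) (b k) ^ 2) * gaussianDensity z := by
  simp only [sum_sq_negHermiteCubic, add_mul _ _ (gaussianDensity _), sub_mul, mul_assoc]
  exact ((integrable_norm_pow_mul_gaussianDensity 6).sub
    ((integrable_norm_pow_mul_gaussianDensity 4).const_mul _)).add
    (((integrable_norm_pow_mul_gaussianDensity 2).const_mul _).const_mul _)

theorem integral_sum_sq_negHermiteCubic_mul_gaussianDensity (b : OrthonormalBasis ι ℝ V) :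
    ∫ z, (∑ i, ∑ j, ∑ k, negHermiteCubic z (b i) (b j) (b k) ^ 2) * gaussianDensity z =
      Fintype.card ι * (Fintype.card ι + 1) * (Fintype.card ι + 2) := by
  have i₂ := (integrable_norm_pow_mul_gaussianDensity (V := V) 2).const_mul
    (3 * (Fintype.card ι + 2 : ℝ))
  have i₄ := (integrable_norm_pow_mul_gaussianDensity (V := V) 4).const_mul 6
  have i₆ := integrable_norm_pow_mul_gaussianDensity (V := V) 6
  simp only [sum_sq_negHermiteCubic, add_mul, sub_mul, mul_assoc (6 : ℝ),
    mul_assoc (3 * (Fintype.card ι + 2 : ℝ))]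
  rw [integral_add (by exact i₆.sub i₄) i₂, integral_sub i₆ i₄, integral_const_mul,
    integral_const_mul, integral_norm_sq_mul_gaussianDensity,
    integral_norm_pow_four_mul_gaussianDensity, integral_norm_pow_six_mul_gaussianDensity,
    finrank_eq_card_basis b.toBasis]
  ring

theorem stmt17_general (b : OrthonormalBasis ι ℝ V) :
    ∫ z, √(∑ i, ∑ j, ∑ k,
      (fderiv ℝ (fun y => fderiv ℝ (fun y' => fderiv ℝ gaussianDensity y' (b i)) y (b j)) z
        (b k)) ^ 2) ≤
      √(Fintype.card ι * (Fintype.card ι + 1) * (Fintype.card ι + 2)) := by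
  simp only [fderiv_fderiv_fderiv_gaussianDensity_apply, mul_pow, ← Finset.sum_mul,
    sqrt_mul' _ (sq_nonneg _), sqrt_sq (gaussianDensity_nonneg _)]
  rw [← integral_sum_sq_negHermiteCubic_mul_gaussianDensity b]
  exact integral_sqrt_mul_le_sqrt_integral_mul (fun z => by positivity) gaussianDensity_nonneg
    (integrable_sum_sq_negHermiteCubic_mul_gaussianDensity b) integrable_gaussianDensity
    integral_gaussianDensity

end HermiteNorm

theorem sqrt_mul_add_one_mul_add_two_le (m : ℕ) :
    √(m * (m + 1) * (m + 2)) ≤ √6 * (m : ℝ) ^ ((3 : ℝ) / 2) := by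
  have pow_bound : (m * (m + 1) * (m + 2) : ℝ) ≤ 6 * m ^ 3 := by
    obtain rfl | hm := m.eq_zero_or_pos
    · simp
    have hm₁ : (1 : ℝ) ≤ m := by exact_mod_cast hm
    calc (m * (m + 1) * (m + 2) : ℝ)
      _ ≤ m * (m + m) * (m + 2 * m) := by gcongr; linarith
      _ = 6 * m ^ 3 := by ring
  calc √(m * (m + 1) * (m + 2))
    _ ≤ √(6 * (m : ℝ) ^ 3) := sqrt_le_sqrt pow_bound
    _ = √6 * (m : ℝ) ^ ((3 : ℝ) / 2) := by
      rw [sqrt_mul (by norm_num), sqrt_eq_rpow ((m : ℝ) ^ 3), ← rpow_natCast_mul (by positivity)]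
      norm_num

theorem gaussianDensity_euclideanSpace (m : ℕ) :
    (gaussianDensity : EuclideanSpace ℝ (Fin m) → ℝ) = stdGaussianDensityE m := by
  funext z
  simp only [gaussianDensity, stdGaussianDensityE, finrank_euclideanSpace_fin]

/-- With `M₃ := ∫_{ℝ^m} (∑_{i,j,k} (∂³φ_I/∂y_i∂y_j∂y_k (z))²)^{1/2} dz`, where `φ_I` is
the standard Gaussian density on `ℝ^m`, one has `M₃ ≤ √6 m^{3/2}`. -/
theorem stmt17 (m : ℕ) :
    (∫ z : EuclideanSpace ℝ (Fin m),
      Real.sqrt (∑ i, ∑ j, ∑ k,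
        (fderiv ℝ (fun y => fderiv ℝ (fun y' => fderiv ℝ (stdGaussianDensityE m) y'
            (EuclideanSpace.single i 1)) y (EuclideanSpace.single j 1)) z
          (EuclideanSpace.single k 1)) ^ 2)) ≤
      Real.sqrt 6 * (m : ℝ) ^ ((3 : ℝ) / 2) := by
  simpa [gaussianDensity_euclideanSpace] using
    (stmt17_general (EuclideanSpace.basisFun (Fin m) ℝ)).trans
      (by simpa using sqrt_mul_add_one_mul_add_two_le m)
end

section
/- Let h : R^m → R be measurable with ‖h‖_∞ ≤ 1, Σ ∈ R^{m×m} positive definite, and t ∈ (0,1). Define f_{t,h,Σ}(y) := (1/2)∫_t^1 (1−s)^{-1} ∫_{R^m} (h(√s·z + √(1−s)·y) − h(z)) φ_Σ(z) dz ds. Then for all i,j,k, the third partial derivative satisfies sup_{y∈R^m} |∂³f_{t,h,Σ}/∂y_i∂y_j∂y_k (y)| ≤ 6 m³ ‖Σ^{-1}‖_op^{3/2} / √t. -/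
open MeasureTheory Real

/-- The density of a centered `m`-dimensional Gaussian vector with positive definite
covariance matrix `S`. -/
noncomputable def gaussianDensityMat (m : ℕ) (S : Matrix (Fin m) (Fin m) ℝ) :
    EuclideanSpace ℝ (Fin m) → ℝ :=
  fun z => (2 * π) ^ (-(m : ℝ) / 2) * S.det ^ (-(1 : ℝ) / 2) *
    Real.exp (-(∑ k, ∑ l, S⁻¹ k l * z k * z l) / 2)

/-- The solution `f_{t,h,Σ}` of the smoothed multivariate Stein equation. -/
noncomputable def steinSol (m : ℕ) (t : ℝ) (h : EuclideanSpace ℝ (Fin m) → ℝ)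
    (S : Matrix (Fin m) (Fin m) ℝ) : EuclideanSpace ℝ (Fin m) → ℝ :=
  fun y => (1 / 2) * ∫ s in t..1, (1 - s)⁻¹ *
    ∫ z, (h (Real.sqrt s • z + Real.sqrt (1 - s) • y) - h z) * gaussianDensityMat m S z

/-! Translating `z` by `√((1-s)/s) y` moves `y` out of the merely measurable `h` and into the
smooth kernel, so each derivative in `y` costs a factor `-√((1-s)/s)` and falls on the kernel. After
three of them the weight is `(1-s)⁻¹ ((1-s)/s)^{3/2} ≤ s^{-3/2}`, whose integral over `(t, 1]` is
below `2/√t`. The weight `(1-s)⁻¹` of the undifferentiated integrand is compensated by the term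
`h(z)`: at `y = 0` a rescaling of `z` shows that the two averages differ by `O(1-s)`, and moving to
general `y` changes the first one by `O(√(1-s))`.

Whitening reduces the `L¹` norm of a third derivative of `φ_Σ` to that of a standard Gaussian, in
directions `B u`, `B v`, `B w` with `‖B x‖² = ⟪x, Σ⁻¹ x⟫`. By AM-GM the third Hermite polynomial is
at most a combination of one-dimensional second and fourth moments, which gives the
dimension-free constant `5` in place of `6 m³`. -/

open SchwartzMap LineDeriv Module
open scoped SchwartzMap LineDeriv

namespace SteinSmoothing

section SchwartzBounds

variable {E F : Type*} [NormedAddCommGroup E] [NormedSpace ℝ E]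
  [NormedAddCommGroup F] [NormedSpace ℝ F]

theorem exists_norm_mul_one_add_norm_pow_le (ψ : 𝓢(E, F)) (k : ℕ) :
    ∃ C, ∀ x, ‖ψ x‖ * (1 + ‖x‖) ^ k ≤ C := by
  have hdecay := one_add_le_sup_seminorm_apply (𝕜 := ℝ) (m := (k, 0)) (k := k) le_rfl le_rfl ψ
  simp only [norm_iteratedFDeriv_zero] at hdecay
  exact ⟨_, fun x => (mul_comm _ _).trans_le (hdecay x)⟩

theorem norm_sub_comp_smul_le (ψ : 𝓢(E, F)) {K r : ℝ} (hr : r ≤ 1) (z : E)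
    (hK : ∀ q ∈ Set.Icc r 1, ‖fderiv ℝ ψ (q • z)‖ ≤ K) :
    ‖ψ z - ψ (r • z)‖ ≤ K * ‖z‖ * (1 - r) := by
  have hderiv : ∀ q ∈ Set.Icc r 1, HasDerivWithinAt (fun q : ℝ => ψ (q • z))
      (fderiv ℝ ψ (q • z) z) (Set.Icc r 1) q := fun q _ => by
    have hline : HasDerivAt (fun q : ℝ => q • z) z q := by
      simpa only [id, one_smul] using (hasDerivAt_id q).smul_const z
    exact ((ψ.differentiableAt (x := q • z)).hasFDerivAt.comp_hasDerivAt q hline).hasDerivWithinAt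
  simpa only [one_smul] using norm_image_sub_le_of_norm_deriv_le_segment' hderiv
    (fun q hq => (fderiv ℝ ψ (q • z)).le_of_opNorm_le (hK q (Set.Ico_subset_Icc_self hq)) z) 1
    ⟨hr, le_rfl⟩

variable [FiniteDimensional ℝ E] [MeasurableSpace E] [BorelSpace E]
  (μ : Measure E) [μ.IsAddHaarMeasure]

theorem integrable_inv_one_add_norm_pow :
    Integrable (fun x : E => ((1 + ‖x‖) ^ (finrank ℝ E + 1))⁻¹) μ := by
  have hdim : (finrank ℝ E : ℝ) < ((finrank ℝ E + 1 : ℕ) : ℝ) := by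
    exact_mod_cast Nat.lt_succ_self _
  refine (integrable_one_add_norm hdim).congr (ae_of_all _ fun x => ?_)
  change (1 + ‖x‖) ^ (-((finrank ℝ E + 1 : ℕ) : ℝ)) = _
  rw [rpow_neg (by positivity), rpow_natCast]

theorem exists_integrable_bound_comp_sub (ψ : 𝓢(E, F)) (R : ℝ) :
    ∃ b : E → ℝ, Integrable b μ ∧ ∀ z w, ‖w‖ ≤ R → ‖ψ (z - w)‖ ≤ b z := by
  set N := finrank ℝ E + 1
  obtain ⟨C, hC⟩ := exists_norm_mul_one_add_norm_pow_le ψ N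
  refine ⟨fun z => C * (1 + R) ^ N * ((1 + ‖z‖) ^ N)⁻¹,
    (integrable_inv_one_add_norm_pow μ).const_mul _, fun z w hw => ?_⟩
  have hpeetre : 1 + ‖z‖ ≤ (1 + ‖z - w‖) * (1 + R) := by
    nlinarith [norm_nonneg (z - w), norm_nonneg w, norm_sub_norm_le z w]
  change _ ≤ C * (1 + R) ^ N * ((1 + ‖z‖) ^ N)⁻¹
  rw [← div_eq_mul_inv, le_div_iff₀ (by positivity)]
  calc ‖ψ (z - w)‖ * (1 + ‖z‖) ^ N
      ≤ ‖ψ (z - w)‖ * ((1 + ‖z - w‖) * (1 + R)) ^ N := by gcongr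
    _ = ‖ψ (z - w)‖ * (1 + ‖z - w‖) ^ N * (1 + R) ^ N := by rw [mul_pow, mul_assoc]
    _ ≤ C * (1 + R) ^ N := by
        have : 0 ≤ R := (norm_nonneg w).trans hw
        gcongr
        exact hC _

theorem exists_integrable_bound_sub_comp_smul (ψ : 𝓢(E, F)) {r₀ : ℝ} (hr₀ : 0 < r₀) :
    ∃ b : E → ℝ, 0 ≤ b ∧ Integrable b μ ∧
      ∀ r ∈ Set.Icc r₀ 1, ∀ z, ‖ψ z - ψ (r • z)‖ ≤ (1 - r) * b z := by
  set N := finrank ℝ E + 1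
  obtain ⟨C, hC⟩ := exists_norm_mul_one_add_norm_pow_le (fderivCLM ℝ E F ψ) (N + 1)
  have hC₀ : 0 ≤ C := le_trans (by positivity) (hC 0)
  refine ⟨fun z => C / r₀ ^ (N + 1) * ((1 + ‖z‖) ^ N)⁻¹, fun z => by positivity,
    (integrable_inv_one_add_norm_pow μ).const_mul _, fun r hr z => ?_⟩
  have hfderiv : ∀ q ∈ Set.Icc r 1,
      ‖fderiv ℝ ψ (q • z)‖ ≤ C / r₀ ^ (N + 1) * ((1 + ‖z‖) ^ (N + 1))⁻¹ := fun q hq => by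
    have hnorm : r₀ * (1 + ‖z‖) ≤ 1 + ‖q • z‖ := by
      rw [norm_smul, norm_of_nonneg (hr₀.le.trans (hr.1.trans hq.1))]
      nlinarith [norm_nonneg z, hr.1, hr.2, hq.1]
    rw [← div_eq_mul_inv, div_div, ← mul_pow, le_div_iff₀ (by positivity)]
    calc ‖fderiv ℝ ψ (q • z)‖ * (r₀ * (1 + ‖z‖)) ^ (N + 1)
        ≤ ‖fderiv ℝ ψ (q • z)‖ * (1 + ‖q • z‖) ^ (N + 1) := by gcongr
      _ ≤ C := hC (q • z)
  have hr1 : 0 ≤ 1 - r := sub_nonneg.2 hr.2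
  calc ‖ψ z - ψ (r • z)‖
      ≤ C / r₀ ^ (N + 1) * ((1 + ‖z‖) ^ (N + 1))⁻¹ * ‖z‖ * (1 - r) :=
        norm_sub_comp_smul_le ψ hr.2 z hfderiv
    _ ≤ C / r₀ ^ (N + 1) * ((1 + ‖z‖) ^ (N + 1))⁻¹ * (1 + ‖z‖) * (1 - r) := by
        gcongr
        linarith
    _ = (1 - r) * (C / r₀ ^ (N + 1) * ((1 + ‖z‖) ^ N)⁻¹) := by
        rw [pow_succ (1 + ‖z‖)]
        field_simp

end SchwartzBounds

section Mehler

variable {E F : Type*} [NormedAddCommGroup E] [NormedSpace ℝ E]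
  [MeasurableSpace E] [BorelSpace E] (μ : Measure E) [μ.IsAddHaarMeasure]
  [NormedAddCommGroup F] [NormedSpace ℝ F] {g h : E → ℝ} {M s : ℝ}

/-- The Mehler-type average `∫ h(√s z + √(1-s) y) ψ(z) dz` of `h` against the (possibly
vector-valued) kernel `ψ`; it is the inner integral of the Stein solution when `ψ` is a Gaussian
density, and the inner integral of its derivatives when `ψ` is a derivative of that density. -/
noncomputable def mehlerAverage (h : E → ℝ) (ψ : 𝓢(E, F)) (s : ℝ) (y : E) : F :=
  ∫ z, h (√s • z + √(1 - s) • y) • ψ z ∂μ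

/-- The ratio `√(1-s) / √s`, the factor produced by each differentiation of a Mehler-type
average. -/
noncomputable def mehlerRatio (s : ℝ) : ℝ := √(1 - s) / √s

theorem mehlerAverage_eq_integral_comp_sub (hs : 0 < s) (ψ : 𝓢(E, F)) (y : E) :
    mehlerAverage μ h ψ s y = ∫ z, h (√s • z) • ψ (z - mehlerRatio s • y) ∂μ := by
  rw [mehlerAverage, ← integral_sub_right_eq_self _ (mehlerRatio s • y)]
  refine integral_congr_ae (ae_of_all _ fun z => ?_)
  have hratio : √s * mehlerRatio s = √(1 - s) := mul_div_cancel₀ _ (sqrt_pos.2 hs).ne'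
  simp only [smul_sub, smul_smul, hratio, sub_add_cancel]

variable [FiniteDimensional ℝ E]

theorem integrable_smul_schwartz_comp_sub (hg : Measurable g) (hgM : ∀ z, |g z| ≤ M)
    (ψ : 𝓢(E, F)) (w : E) : Integrable (fun z => g z • ψ (z - w)) μ :=
  (ψ.integrable.comp_sub_right w).bdd_smul M hg.aestronglyMeasurable (ae_of_all _ hgM)

theorem hasFDerivAt_integral_smul_comp_sub (hg : Measurable g) (hgM : ∀ z, |g z| ≤ M)
    (ψ : 𝓢(E, F)) (w : E) :
    HasFDerivAt (fun w => ∫ z, g z • ψ (z - w) ∂μ)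
      (-∫ z, g z • fderivCLM ℝ E F ψ (z - w) ∂μ) w := by
  obtain ⟨b, hb, hψb⟩ :=
    exists_integrable_bound_comp_sub μ (fderivCLM ℝ E F ψ) (‖w‖ + 1)
  rw [← integral_neg]
  refine hasFDerivAt_integral_of_dominated_of_fderiv_le (bound := fun z => M * b z)
    (F' := fun w z => -(g z • fderivCLM ℝ E F ψ (z - w)))
    (Metric.ball_mem_nhds w one_pos)
    (.of_forall fun w => (integrable_smul_schwartz_comp_sub μ hg hgM ψ w).aestronglyMeasurable)
    (integrable_smul_schwartz_comp_sub μ hg hgM ψ w)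
    (integrable_smul_schwartz_comp_sub μ hg hgM _ w).fun_neg.aestronglyMeasurable
    (ae_of_all _ fun z w' hw' => ?_) (hb.const_mul M)
    (ae_of_all _ fun z w' _ => ?_)
  · have hw'_norm : ‖w'‖ ≤ ‖w‖ + 1 := by
      linarith [norm_le_norm_add_norm_sub w w', mem_ball_iff_norm'.1 hw']
    rw [norm_neg, norm_smul]
    exact mul_le_mul (hgM z) (hψb z w' hw'_norm) (norm_nonneg _) ((abs_nonneg _).trans (hgM z))
  · have hshift : HasFDerivAt (fun w => z - w) (-ContinuousLinearMap.id ℝ E) w' :=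
      (hasFDerivAt_id w').const_sub z
    refine (((ψ.hasFDerivAt (z - w')).comp w' hshift).const_smul (g z)).congr_fderiv ?_
    rw [ContinuousLinearMap.comp_neg, ContinuousLinearMap.comp_id, smul_neg]
    rfl

theorem hasFDerivAt_mehlerAverage (hh : Measurable h) (hM : ∀ z, |h z| ≤ M) (hs : 0 < s)
    (ψ : 𝓢(E, F)) (y : E) :
    HasFDerivAt (mehlerAverage μ h ψ s)
      (-(mehlerRatio s • mehlerAverage μ h (fderivCLM ℝ E F ψ) s y)) y := by
  have hscale : HasFDerivAt (fun y : E => mehlerRatio s • y)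
      (mehlerRatio s • ContinuousLinearMap.id ℝ E) y := (hasFDerivAt_id y).const_smul _
  rw [funext (mehlerAverage_eq_integral_comp_sub μ hs ψ), mehlerAverage_eq_integral_comp_sub μ hs]
  refine ((hasFDerivAt_integral_smul_comp_sub μ (hh.comp (measurable_const_smul √s))
    (fun z => hM _) ψ (mehlerRatio s • y)).comp y hscale).congr_fderiv ?_
  rw [ContinuousLinearMap.comp_smul, ContinuousLinearMap.comp_id, smul_neg]
  rfl

theorem mehlerAverage_fderivCLM_apply (hh : Measurable h) (hM : ∀ z, |h z| ≤ M)
    (ψ : 𝓢(E, F)) (s : ℝ) (y v : E) :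
    mehlerAverage μ h (fderivCLM ℝ E F ψ) s y v = mehlerAverage μ h (∂_{v} ψ) s y := by
  rw [mehlerAverage, ContinuousLinearMap.integral_apply]
  · rfl
  · exact (fderivCLM ℝ E F ψ).integrable.bdd_smul M
      (hh.comp (by fun_prop)).aestronglyMeasurable (ae_of_all _ fun z => hM _)

theorem norm_mehlerAverage_le (hM : ∀ z, |h z| ≤ M) (ψ : 𝓢(E, F)) (s : ℝ) (y : E) :
    ‖mehlerAverage μ h ψ s y‖ ≤ M * ∫ z, ‖ψ z‖ ∂μ := by
  rw [← integral_const_mul]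
  refine norm_integral_le_of_norm_le (ψ.integrable.norm.const_mul M) (ae_of_all _ fun z => ?_)
  rw [norm_smul]
  exact mul_le_mul_of_nonneg_right (hM _) (norm_nonneg _)

theorem norm_mehlerAverage_sub_le (hh : Measurable h) (hM : ∀ z, |h z| ≤ M) (hs : 0 < s)
    (ψ : 𝓢(E, F)) (y y' : E) :
    ‖mehlerAverage μ h ψ s y - mehlerAverage μ h ψ s y'‖ ≤
      mehlerRatio s * (M * ∫ z, ‖fderivCLM ℝ E F ψ z‖ ∂μ) * ‖y - y'‖ := by
  refine convex_univ.norm_image_sub_le_of_norm_hasFDerivWithin_le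
    (fun x _ => (hasFDerivAt_mehlerAverage μ hh hM hs ψ x).hasFDerivWithinAt) (fun x _ => ?_)
    (Set.mem_univ y') (Set.mem_univ y)
  have hratio : 0 ≤ mehlerRatio s := div_nonneg (sqrt_nonneg _) (sqrt_nonneg _)
  rw [norm_neg, norm_smul, norm_of_nonneg hratio]
  exact mul_le_mul_of_nonneg_left (norm_mehlerAverage_le μ hM _ s x) hratio

theorem stronglyMeasurable_mehlerAverage (hh : Measurable h) (ψ : 𝓢(E, F)) (y : E) :
    StronglyMeasurable fun s => mehlerAverage μ h ψ s y := by
  have hint : StronglyMeasurable fun p : ℝ × E => h (√p.1 • p.2 + √(1 - p.1) • y) • ψ p.2 :=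
    (hh.comp (by fun_prop)).stronglyMeasurable.smul
      (ψ.continuous.stronglyMeasurable.comp_measurable measurable_snd)
  exact hint.integral_prod_right'

end Mehler

section SteinWeight

variable {n : ℕ} {s t : ℝ}

/-- The weight `(1-s)⁻¹ (√(1-s) / √s) ^ n` of the `n`-th derivative of the Stein solution. -/
noncomputable def steinWeight (n : ℕ) (s : ℝ) : ℝ := (1 - s)⁻¹ * mehlerRatio s ^ n

theorem measurable_steinWeight (n : ℕ) : Measurable (steinWeight n) := by
  unfold steinWeight mehlerRatio
  fun_prop

theorem steinWeight_nonneg (n : ℕ) (hs : s ≤ 1) : 0 ≤ steinWeight n s := by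
  have := sub_nonneg.2 hs
  unfold steinWeight mehlerRatio
  positivity

theorem steinWeight_mul_mehlerRatio (n : ℕ) (s : ℝ) :
    steinWeight n s * mehlerRatio s = steinWeight (n + 1) s := by
  rw [steinWeight, steinWeight, pow_succ, mul_assoc]

theorem steinWeight_succ (n : ℕ) (s : ℝ) :
    steinWeight (n + 1) s = (√(1 - s))⁻¹ * √(1 - s) ^ n * (√s)⁻¹ ^ (n + 1) := by
  rw [steinWeight, mehlerRatio, ← sqrt_div_self (x := 1 - s)]
  ring

theorem steinWeight_succ_le (ht : 0 < t) (hs : s ∈ Set.Ioc t 1) :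
    steinWeight (n + 1) s ≤ (√(1 - s))⁻¹ * (√t)⁻¹ ^ (n + 1) := by
  have hsqrt : √(1 - s) ^ n ≤ 1 :=
    pow_le_one₀ (sqrt_nonneg _) (sqrt_le_one.2 (by linarith [hs.1]))
  have := sqrt_pos.2 ht
  rw [steinWeight_succ]
  gcongr
  · exact mul_le_of_le_one_right (by positivity) hsqrt
  · exact hs.1.le

theorem steinWeight_three_le (hs : s ∈ Set.Ioc t 1) (ht : 0 < t) :
    steinWeight 3 s ≤ s ^ (-(3 / 2) : ℝ) := by
  have hs0 : 0 < s := ht.trans hs.1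
  have hrpow : s ^ (-(3 / 2) : ℝ) = (√s)⁻¹ ^ 3 := by
    rw [rpow_neg hs0.le, sqrt_eq_rpow, inv_pow, ← rpow_natCast, ← rpow_mul hs0.le]
    norm_num
  have hsqrt : (√(1 - s))⁻¹ * √(1 - s) ^ 2 ≤ 1 := by
    rw [pow_two, ← mul_assoc, inv_mul_mul_self]
    exact sqrt_le_one.2 (by linarith)
  rw [steinWeight_succ, hrpow]
  exact mul_le_of_le_one_left (by positivity) hsqrt

theorem integrableOn_inv_sqrt_one_sub (ht : t ≤ 1) :
    IntegrableOn (fun s => (√(1 - s))⁻¹) (Set.Ioc t 1) := by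
  have hrpow := (intervalIntegral.intervalIntegrable_rpow' (a := 0) (b := 1 - t)
    (r := -(1 / 2)) (by norm_num)).comp_sub_left 1
  simp only [sub_zero, sub_sub_cancel] at hrpow
  refine ((intervalIntegrable_iff_integrableOn_Ioc_of_le ht).1 hrpow.symm).congr_fun
    (fun s hs => ?_) measurableSet_Ioc
  simp only [rpow_neg (sub_nonneg.2 hs.2), sqrt_eq_rpow]

theorem integrableOn_steinWeight_succ (ht : 0 < t) (ht1 : t ≤ 1) (n : ℕ) :
    IntegrableOn (steinWeight (n + 1)) (Set.Ioc t 1) := by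
  refine ((integrableOn_inv_sqrt_one_sub ht1).mul_const ((√t)⁻¹ ^ (n + 1))).mono'
    (measurable_steinWeight _).aestronglyMeasurable
    ((ae_restrict_mem measurableSet_Ioc).mono fun s hs => ?_)
  rw [norm_of_nonneg (steinWeight_nonneg _ hs.2)]
  exact steinWeight_succ_le ht hs

theorem integral_steinWeight_three_le (ht : 0 < t) (ht1 : t ≤ 1) :
    ∫ s in Set.Ioc t 1, steinWeight 3 s ≤ 2 / √t := by
  have h0 : (0 : ℝ) ∉ Set.uIcc t 1 := Set.notMem_uIcc_of_lt ht one_pos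
  have hint : IntegrableOn (fun s : ℝ => s ^ (-(3 / 2) : ℝ)) (Set.Ioc t 1) :=
    (intervalIntegrable_iff_integrableOn_Ioc_of_le ht1).1
      (intervalIntegral.intervalIntegrable_rpow (.inr h0))
  calc ∫ s in Set.Ioc t 1, steinWeight 3 s
      ≤ ∫ s in Set.Ioc t 1, s ^ (-(3 / 2) : ℝ) :=
        setIntegral_mono_on (integrableOn_steinWeight_succ ht ht1 2) hint measurableSet_Ioc
          fun s hs => steinWeight_three_le hs ht
    _ = 2 / √t - 2 := by
        rw [← intervalIntegral.integral_of_le ht1, integral_rpow (.inr ⟨by norm_num, h0⟩),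
          show (-(3 / 2) : ℝ) + 1 = -(1 / 2) by norm_num, rpow_neg ht.le, ← sqrt_eq_rpow,
          one_rpow]
        field_simp
        ring
    _ ≤ 2 / √t := by linarith

end SteinWeight

section SteinIntegral

variable {E F : Type*} [NormedAddCommGroup E] [NormedSpace ℝ E] [MeasurableSpace E]
  [NormedAddCommGroup F] [NormedSpace ℝ F] {h : E → ℝ} {M s t : ℝ} {n : ℕ}

/-- The Stein-type integral `∫_t^1 steinWeight n s • (mehlerAverage μ h ψ s y - c) ds`. Up to the
factor `1/2`, the Stein solution has `n = 0` and `c = ∫ h ψ`, and its derivatives of order `n ≥ 1`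
have `c = 0`. -/
noncomputable def steinIntegral (μ : Measure E) (t : ℝ) (n : ℕ) (h : E → ℝ) (c : F)
    (ψ : 𝓢(E, F)) (y : E) : F :=
  ∫ s in Set.Ioc t 1, steinWeight n s • (mehlerAverage μ h ψ s y - c)

variable [BorelSpace E] [FiniteDimensional ℝ E] (μ : Measure E) [μ.IsAddHaarMeasure]

theorem norm_steinWeight_smul_mehlerAverage_le (hM : ∀ z, |h z| ≤ M) (ψ : 𝓢(E, F)) (n : ℕ)
    (hs : s ≤ 1) (y : E) :
    ‖steinWeight n s • mehlerAverage μ h ψ s y‖ ≤ steinWeight n s * (M * ∫ z, ‖ψ z‖ ∂μ) := by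
  rw [norm_smul, norm_of_nonneg (steinWeight_nonneg n hs)]
  exact mul_le_mul_of_nonneg_left (norm_mehlerAverage_le μ hM ψ s y) (steinWeight_nonneg n hs)

theorem stronglyMeasurable_steinWeight_smul (hh : Measurable h) (ψ : 𝓢(E, F)) (n : ℕ) (c : F)
    (y : E) : StronglyMeasurable fun s => steinWeight n s • (mehlerAverage μ h ψ s y - c) :=
  (measurable_steinWeight n).stronglyMeasurable.smul
    ((stronglyMeasurable_mehlerAverage μ hh ψ y).sub stronglyMeasurable_const)

theorem integrableOn_steinWeight_succ_smul (hh : Measurable h) (hM : ∀ z, |h z| ≤ M) (ht : 0 < t)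
    (ht1 : t ≤ 1) (ψ : 𝓢(E, F)) (n : ℕ) (y : E) :
    IntegrableOn (fun s => steinWeight (n + 1) s • (mehlerAverage μ h ψ s y - 0))
      (Set.Ioc t 1) := by
  refine ((integrableOn_steinWeight_succ ht ht1 n).mul_const (M * ∫ z, ‖ψ z‖ ∂μ)).mono'
    (stronglyMeasurable_steinWeight_smul μ hh ψ (n + 1) 0 y).aestronglyMeasurable
    ((ae_restrict_mem measurableSet_Ioc).mono fun s hs => ?_)
  rw [sub_zero]
  exact norm_steinWeight_smul_mehlerAverage_le μ hM ψ (n + 1) hs.2 y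

theorem hasFDerivAt_steinIntegral (hh : Measurable h) (hM : ∀ z, |h z| ≤ M) (ht : 0 < t)
    (ht1 : t ≤ 1) (ψ : 𝓢(E, F)) (c : F) {y : E}
    (hint : IntegrableOn (fun s => steinWeight n s • (mehlerAverage μ h ψ s y - c))
      (Set.Ioc t 1)) :
    HasFDerivAt (steinIntegral μ t n h c ψ)
      (-steinIntegral μ t (n + 1) h 0 (fderivCLM ℝ E F ψ) y) y := by
  rw [steinIntegral, ← integral_neg]
  refine hasFDerivAt_integral_of_dominated_of_fderiv_le
    (bound := fun s => steinWeight (n + 1) s * (M * ∫ z, ‖fderivCLM ℝ E F ψ z‖ ∂μ))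
    (F' := fun y s =>
      -(steinWeight (n + 1) s • (mehlerAverage μ h (fderivCLM ℝ E F ψ) s y - 0)))
    Filter.univ_mem
    (.of_forall fun y => (stronglyMeasurable_steinWeight_smul μ hh ψ n c y).aestronglyMeasurable)
    hint (stronglyMeasurable_steinWeight_smul μ hh _ (n + 1) 0 y).neg.aestronglyMeasurable
    ((ae_restrict_mem measurableSet_Ioc).mono fun s hs y _ => ?_)
    ((integrableOn_steinWeight_succ ht ht1 n).mul_const _)
    ((ae_restrict_mem measurableSet_Ioc).mono fun s hs y _ => ?_)
  · rw [norm_neg, sub_zero]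
    exact norm_steinWeight_smul_mehlerAverage_le μ hM _ (n + 1) hs.2 y
  · refine (((hasFDerivAt_mehlerAverage μ hh hM (ht.trans hs.1) ψ y).sub_const c).const_smul
      (steinWeight n s)).congr_fderiv ?_
    rw [smul_neg, smul_smul, steinWeight_mul_mehlerRatio, sub_zero]

theorem fderiv_steinIntegral_apply (hh : Measurable h) (hM : ∀ z, |h z| ≤ M) (ht : 0 < t)
    (ht1 : t ≤ 1) (ψ : 𝓢(E, F)) (c : F) {y : E}
    (hint : IntegrableOn (fun s => steinWeight n s • (mehlerAverage μ h ψ s y - c))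
      (Set.Ioc t 1)) (v : E) :
    fderiv ℝ (steinIntegral μ t n h c ψ) y v = -steinIntegral μ t (n + 1) h 0 (∂_{v} ψ) y := by
  rw [(hasFDerivAt_steinIntegral μ hh hM ht ht1 ψ c hint).fderiv, neg_apply,
    steinIntegral, steinIntegral, ContinuousLinearMap.integral_apply
      (integrableOn_steinWeight_succ_smul μ hh hM ht ht1 (fderivCLM ℝ E F ψ) n y)]
  simp only [sub_zero, smul_apply, mehlerAverage_fderivCLM_apply μ hh hM]

theorem norm_steinIntegral_three_le (hM : ∀ z, |h z| ≤ M) (ht : 0 < t) (ht1 : t ≤ 1)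
    (ψ : 𝓢(E, F)) (y : E) :
    ‖steinIntegral μ t 3 h 0 ψ y‖ ≤ 2 / √t * (M * ∫ z, ‖ψ z‖ ∂μ) := by
  have hM0 : 0 ≤ M := (abs_nonneg _).trans (hM 0)
  calc ‖steinIntegral μ t 3 h 0 ψ y‖
      ≤ ∫ s in Set.Ioc t 1, steinWeight 3 s * (M * ∫ z, ‖ψ z‖ ∂μ) := by
        refine norm_integral_le_of_norm_le ((integrableOn_steinWeight_succ ht ht1 2).mul_const _)
          ((ae_restrict_mem measurableSet_Ioc).mono fun s hs => ?_)
        rw [sub_zero]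
        exact norm_steinWeight_smul_mehlerAverage_le μ hM ψ 3 hs.2 y
    _ = (∫ s in Set.Ioc t 1, steinWeight 3 s) * (M * ∫ z, ‖ψ z‖ ∂μ) := integral_mul_const _ _
    _ ≤ 2 / √t * (M * ∫ z, ‖ψ z‖ ∂μ) := by
        gcongr
        exact integral_steinWeight_three_le ht ht1

theorem mehlerAverage_zero_sub_integral (hh : Measurable h) (hM : ∀ z, |h z| ≤ M) (hs : 0 < s)
    (ψ : 𝓢(E, F)) :
    mehlerAverage μ h ψ s 0 - ∫ z, h z • ψ z ∂μ =
      (∫ z, h (√s • z) • (ψ z - ψ (√s • z)) ∂μ) +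
        ((√s ^ finrank ℝ E)⁻¹ - 1) • ∫ z, h z • ψ z ∂μ := by
  have hsqrt : √s ≠ 0 := (sqrt_pos.2 hs).ne'
  have hscaled : Measurable fun z : E => h (√s • z) := hh.comp (measurable_const_smul √s)
  have hchange : ∫ z, h (√s • z) • ψ (√s • z) ∂μ =
      (√s ^ finrank ℝ E)⁻¹ • ∫ z, h z • ψ z ∂μ :=
    Measure.integral_comp_smul_of_nonneg μ (fun z => h z • ψ z) √s (hR := sqrt_nonneg s)
  have hψ : Integrable (fun z => h (√s • z) • ψ z) μ :=
    ψ.integrable.bdd_smul M hscaled.aestronglyMeasurable (ae_of_all _ fun z => hM _)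
  have hψs : Integrable (fun z => h (√s • z) • ψ (√s • z)) μ :=
    (ψ.integrable.comp_smul hsqrt).bdd_smul M hscaled.aestronglyMeasurable
      (ae_of_all _ fun z => hM _)
  simp only [smul_sub, integral_sub hψ hψs, hchange, mehlerAverage, smul_zero, add_zero, sub_smul,
    one_smul]
  abel

theorem inv_pow_sub_one_le {r₀ r : ℝ} (hr₀ : 0 < r₀) (hr : r ∈ Set.Icc r₀ 1) (d : ℕ) :
    (r ^ d)⁻¹ - 1 ≤ (1 - r) * (d / r₀ ^ d) := by
  have hr' : 0 < r := hr₀.trans_le hr.1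
  have hbernoulli : 1 - r ^ d ≤ d * (1 - r) := by
    linarith [one_add_mul_sub_le_pow (a := r) (by linarith) d]
  calc (r ^ d)⁻¹ - 1 = (1 - r ^ d) / r ^ d := by field_simp
    _ ≤ d * (1 - r) / r₀ ^ d := by
        have := sub_nonneg.2 hr.2
        gcongr
        exact hr.1
    _ = (1 - r) * (d / r₀ ^ d) := by ring

theorem exists_norm_mehlerAverage_zero_sub_integral_le (hh : Measurable h) (hM : ∀ z, |h z| ≤ M)
    (ht : 0 < t) (ψ : 𝓢(E, F)) :
    ∃ C, 0 ≤ C ∧ ∀ s ∈ Set.Ioc t 1,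
      ‖mehlerAverage μ h ψ s 0 - ∫ z, h z • ψ z ∂μ‖ ≤ C * (1 - s) := by
  set I := ∫ z, h z • ψ z ∂μ
  set d := finrank ℝ E
  obtain ⟨b, hb₀, hb, hψb⟩ := exists_integrable_bound_sub_comp_smul μ ψ (sqrt_pos.2 ht)
  have hM₀ : 0 ≤ M := (abs_nonneg _).trans (hM 0)
  have hC₀ : 0 ≤ M * (∫ z, b z ∂μ) + d / √t ^ d * ‖I‖ :=
    add_nonneg (mul_nonneg hM₀ (integral_nonneg hb₀)) (by positivity)
  refine ⟨M * (∫ z, b z ∂μ) + d / √t ^ d * ‖I‖, hC₀, fun s hs => ?_⟩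
  have hsqrt : √s ∈ Set.Icc √t 1 := ⟨sqrt_le_sqrt hs.1.le, sqrt_le_one.2 hs.2⟩
  have hdiff : ‖∫ z, h (√s • z) • (ψ z - ψ (√s • z)) ∂μ‖ ≤ M * ((1 - √s) * ∫ z, b z ∂μ) := by
    rw [← integral_const_mul, ← integral_const_mul]
    refine norm_integral_le_of_norm_le ((hb.const_mul _).const_mul M) (ae_of_all _ fun z => ?_)
    rw [norm_smul]
    exact mul_le_mul (hM _) (hψb _ hsqrt z) (norm_nonneg _) hM₀
  have hscale : ‖((√s ^ d)⁻¹ - 1) • I‖ ≤ (1 - √s) * (d / √t ^ d) * ‖I‖ := by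
    rw [norm_smul, norm_of_nonneg (sub_nonneg.2 ?_)]
    · gcongr
      exact inv_pow_sub_one_le (sqrt_pos.2 ht) hsqrt d
    · exact (one_le_inv₀ (by have := ht.trans hs.1; positivity)).2
        (pow_le_one₀ (sqrt_nonneg s) hsqrt.2)
  calc ‖mehlerAverage μ h ψ s 0 - I‖
      ≤ M * ((1 - √s) * ∫ z, b z ∂μ) + (1 - √s) * (d / √t ^ d) * ‖I‖ := by
        rw [mehlerAverage_zero_sub_integral μ hh hM (ht.trans hs.1)]
        exact norm_add_le_of_le hdiff hscale
    _ = (M * (∫ z, b z ∂μ) + d / √t ^ d * ‖I‖) * (1 - √s) := by ring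
    _ ≤ (M * (∫ z, b z ∂μ) + d / √t ^ d * ‖I‖) * (1 - s) := by
        gcongr
        exact le_sqrt_of_sq_le (by nlinarith [hs.1, hs.2])

theorem integrableOn_steinWeight_zero_smul (hh : Measurable h) (hM : ∀ z, |h z| ≤ M) (ht : 0 < t)
    (ht1 : t ≤ 1) (ψ : 𝓢(E, F)) (y : E) :
    IntegrableOn (fun s => steinWeight 0 s • (mehlerAverage μ h ψ s y - ∫ z, h z • ψ z ∂μ))
      (Set.Ioc t 1) := by
  obtain ⟨C, hC₀, hC⟩ := exists_norm_mehlerAverage_zero_sub_integral_le μ hh hM ht ψ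
  set K := M * ∫ z, ‖fderivCLM ℝ E F ψ z‖ ∂μ
  have hbound : IntegrableOn (fun s => steinWeight 1 s * (K * ‖y‖) + C) (Set.Ioc t 1) :=
    ((integrableOn_steinWeight_succ ht ht1 0).mul_const _).add (integrableOn_const (by simp))
  refine hbound.mono' (stronglyMeasurable_steinWeight_smul μ hh ψ 0 _ y).aestronglyMeasurable
    ((ae_restrict_mem measurableSet_Ioc).mono fun s hs => ?_)
  have hw : 0 ≤ steinWeight 0 s := steinWeight_nonneg 0 hs.2
  have hw' : steinWeight 0 s * (1 - s) ≤ 1 := by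
    rw [steinWeight, pow_zero, mul_one]
    exact inv_mul_le_one
  calc ‖steinWeight 0 s • (mehlerAverage μ h ψ s y - ∫ z, h z • ψ z ∂μ)‖
      ≤ steinWeight 0 s * (mehlerRatio s * K * ‖y - 0‖ + C * (1 - s)) := by
        rw [norm_smul, norm_of_nonneg hw]
        refine mul_le_mul_of_nonneg_left ((norm_sub_le_norm_sub_add_norm_sub _ _ _).trans
          (add_le_add (norm_mehlerAverage_sub_le μ hh hM (ht.trans hs.1) ψ y 0) (hC s hs))) hw
    _ = steinWeight 1 s * (K * ‖y‖) + C * (steinWeight 0 s * (1 - s)) := by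
        rw [← steinWeight_mul_mehlerRatio 0 s, sub_zero]
        ring
    _ ≤ steinWeight 1 s * (K * ‖y‖) + C := by
        gcongr
        exact mul_le_of_le_one_right hC₀ hw'

end SteinIntegral

section Gaussian

variable {V : Type*} [NormedAddCommGroup V] [InnerProductSpace ℝ V]

theorem exists_norm_iteratedFDeriv_exp_comp_le {E : Type*} [NormedAddCommGroup E]
    [NormedSpace ℝ E] {q : E → ℝ} (hq : q.HasTemperateGrowth) (n : ℕ) :
    ∃ k C, ∀ x, ‖iteratedFDeriv ℝ n (rexp ∘ q) x‖ ≤ C * (1 + ‖x‖) ^ k * rexp (q x) := by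
  obtain ⟨k, C, hC, hqC⟩ := hq.norm_iteratedFDeriv_le_uniform n
  refine ⟨k * n, n.factorial * (1 + C) ^ n, fun x => ?_⟩
  have hexp : ∀ i ≤ n, ‖iteratedFDeriv ℝ i rexp (q x)‖ ≤ rexp (q x) := fun i _ => by
    rw [norm_iteratedFDeriv_eq_norm_iteratedDeriv, iteratedDeriv_eq_iterate, iter_deriv_exp,
      norm_of_nonneg (exp_nonneg _)]
  have hbase : 1 ≤ (1 + C) * (1 + ‖x‖) ^ k :=
    one_le_mul_of_one_le_of_one_le (by linarith)
      (one_le_pow₀ (by linarith [norm_nonneg x]))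
  have hinner : ∀ i, 1 ≤ i → i ≤ n →
      ‖iteratedFDeriv ℝ i q x‖ ≤ ((1 + C) * (1 + ‖x‖) ^ k) ^ i := fun i hi hin =>
    calc ‖iteratedFDeriv ℝ i q x‖ ≤ C * (1 + ‖x‖) ^ k := hqC i hin x
      _ ≤ (1 + C) * (1 + ‖x‖) ^ k := by gcongr; linarith
      _ ≤ ((1 + C) * (1 + ‖x‖) ^ k) ^ i := le_self_pow₀ hbase (by omega)
  calc ‖iteratedFDeriv ℝ n (rexp ∘ q) x‖
      ≤ n.factorial * rexp (q x) * ((1 + C) * (1 + ‖x‖) ^ k) ^ n :=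
        norm_iteratedFDeriv_comp_le (N := n) contDiff_exp (hq.1.of_le (by exact_mod_cast le_top))
          le_rfl x hexp hinner
    _ = n.factorial * (1 + C) ^ n * (1 + ‖x‖) ^ (k * n) * rexp (q x) := by
        rw [mul_pow, ← pow_mul]
        ring

theorem one_add_pow_mul_exp_neg_sq_div_two_le {r : ℝ} (hr : 0 ≤ r) (n : ℕ) :
    (1 + r) ^ n * rexp (-r ^ 2 / 2) ≤ rexp (n ^ 2 / 2) := by
  calc (1 + r) ^ n * rexp (-r ^ 2 / 2) ≤ rexp r ^ n * rexp (-r ^ 2 / 2) := by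
        gcongr
        linarith [add_one_le_exp r]
    _ = rexp (n * r - r ^ 2 / 2) := by
        rw [← exp_nat_mul, ← exp_add]
        ring_nf
    _ ≤ rexp (n ^ 2 / 2) := by
        gcongr
        linarith [sq_nonneg ((n : ℝ) - r)]

theorem exists_norm_pow_mul_iteratedFDeriv_gaussian_le (k n : ℕ) :
    ∃ C, ∀ x : V,
      ‖x‖ ^ k * ‖iteratedFDeriv ℝ n (fun x : V => rexp (-‖x‖ ^ 2 / 2)) x‖ ≤ C := by
  have hq : (fun x : V => -‖x‖ ^ 2 / 2).HasTemperateGrowth := by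
    have hmul : (fun x : V => -‖x‖ ^ 2 / 2) = fun x => -(1 / 2) * ‖x‖ ^ 2 :=
      funext fun x => by ring
    rw [hmul]
    fun_prop
  obtain ⟨l, C, hC⟩ := exists_norm_iteratedFDeriv_exp_comp_le hq n
  refine ⟨|C| * rexp ((k + l : ℕ) ^ 2 / 2), fun x => ?_⟩
  calc ‖x‖ ^ k * ‖iteratedFDeriv ℝ n (fun x : V => rexp (-‖x‖ ^ 2 / 2)) x‖
      ≤ (1 + ‖x‖) ^ k * (|C| * (1 + ‖x‖) ^ l * rexp (-‖x‖ ^ 2 / 2)) := by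
        gcongr
        · linarith
        · exact (hC x).trans (by gcongr; exact le_abs_self C)
    _ = |C| * ((1 + ‖x‖) ^ (k + l) * rexp (-‖x‖ ^ 2 / 2)) := by ring
    _ ≤ |C| * rexp ((k + l : ℕ) ^ 2 / 2) := by
        gcongr
        exact one_add_pow_mul_exp_neg_sq_div_two_le (norm_nonneg x) (k + l)

/-- The unnormalized standard Gaussian `exp (-‖x‖² / 2)` as a Schwartz function. -/
noncomputable def gaussianSchwartz (V : Type*) [NormedAddCommGroup V] [InnerProductSpace ℝ V] :
    𝓢(V, ℝ) where
  toFun x := rexp (-‖x‖ ^ 2 / 2)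
  smooth' := ((contDiff_norm_sq ℝ).neg.div_const 2).exp
  decay' := exists_norm_pow_mul_iteratedFDeriv_gaussian_le

theorem gaussianSchwartz_apply (x : V) : gaussianSchwartz V x = rexp (-‖x‖ ^ 2 / 2) := rfl

theorem hasFDerivAt_gaussianSchwartz (x : V) :
    HasFDerivAt (gaussianSchwartz V) (-gaussianSchwartz V x • innerSL ℝ x) x := by
  have hq : HasFDerivAt (fun x : V => -‖x‖ ^ 2 / 2) (-innerSL ℝ x) x := by
    refine ((hasStrictFDerivAt_norm_sq x).hasFDerivAt.fun_neg.mul_const (2⁻¹ : ℝ)).congr_fderiv ?_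
    rw [two_smul]
    module
  exact hq.exp.congr_fderiv (by rw [smul_neg, neg_smul, gaussianSchwartz_apply])

theorem fderiv_mul_gaussianSchwartz_apply {p : V → ℝ} {p' : V →L[ℝ] ℝ} {x : V}
    (hp : HasFDerivAt p p' x) (v : V) :
    fderiv ℝ (fun x => p x * gaussianSchwartz V x) x v =
      (p' v - p x * inner ℝ v x) * gaussianSchwartz V x := by
  rw [(hp.fun_mul (hasFDerivAt_gaussianSchwartz x)).fderiv]
  simp only [add_apply, smul_apply, innerSL_apply_apply, real_inner_comm, smul_eq_mul]
  ring

theorem hasFDerivAt_inner_right (a x : V) :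
    HasFDerivAt (fun x => inner ℝ a x) (innerSL ℝ a) x := (innerSL ℝ a).hasFDerivAt

theorem lineDerivOp_gaussianSchwartz (a x : V) :
    ∂_{a} (gaussianSchwartz V) x = -inner ℝ a x * gaussianSchwartz V x := by
  rw [lineDerivOp_apply_eq_fderiv, (hasFDerivAt_gaussianSchwartz x).fderiv]
  simp [real_inner_comm, mul_comm]

theorem lineDerivOp_lineDerivOp_gaussianSchwartz (a b x : V) :
    ∂_{b} (∂_{a} (gaussianSchwartz V)) x =
      (inner ℝ a x * inner ℝ b x - inner ℝ a b) * gaussianSchwartz V x := by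
  rw [lineDerivOp_apply_eq_fderiv, funext (lineDerivOp_gaussianSchwartz a),
    fderiv_mul_gaussianSchwartz_apply (hasFDerivAt_inner_right a x).fun_neg]
  simp only [neg_apply, innerSL_apply_apply]
  ring

theorem lineDerivOp_lineDerivOp_lineDerivOp_gaussianSchwartz (a b c x : V) :
    ∂_{c} (∂_{b} (∂_{a} (gaussianSchwartz V))) x =
      (inner ℝ a c * inner ℝ b x + inner ℝ b c * inner ℝ a x + inner ℝ a b * inner ℝ c x
        - inner ℝ a x * inner ℝ b x * inner ℝ c x) * gaussianSchwartz V x := by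
  rw [lineDerivOp_apply_eq_fderiv, funext (lineDerivOp_lineDerivOp_gaussianSchwartz a b),
    fderiv_mul_gaussianSchwartz_apply (((hasFDerivAt_inner_right a x).fun_mul
      (hasFDerivAt_inner_right b x)).sub_const _)]
  simp only [add_apply, smul_apply, innerSL_apply_apply, smul_eq_mul]
  ring

theorem abs_le_one_add_sq_div_two (p : ℝ) : |p| ≤ (1 + p ^ 2) / 2 := by
  nlinarith [sq_nonneg (|p| - 1), sq_abs p]

theorem abs_mul_mul_le (p q r : ℝ) :
    |p * q * r| ≤ (p ^ 2 + p ^ 4) / 6 + (q ^ 2 + q ^ 4) / 6 + (r ^ 2 + r ^ 4) / 6 := by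
  have hcube : ∀ x : ℝ, |x| ^ 3 ≤ (x ^ 2 + x ^ 4) / 2 := fun x => by
    have hsq : 0 ≤ (|x| - |x| ^ 2) ^ 2 := sq_nonneg _
    have h4 : |x| ^ 4 = x ^ 4 := (by decide : Even 4).pow_abs x
    linarith [sq_abs x]
  have hamgm : |p| * |q| * |r| ≤ (|p| ^ 3 + |q| ^ 3 + |r| ^ 3) / 3 := by
    have hsum : 0 ≤ |p| + |q| + |r| := by positivity
    linarith [mul_nonneg hsum (sq_nonneg (|p| - |q|)), mul_nonneg hsum (sq_nonneg (|q| - |r|)),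
      mul_nonneg hsum (sq_nonneg (|p| - |r|))]
  rw [abs_mul, abs_mul]
  linarith [hcube p, hcube q, hcube r]

/-- The polynomial `1/2 + 2/3 ⟪v, x⟫² + 1/6 ⟪v, x⟫⁴`; three of them dominate the third Hermite
polynomial in three directions of norm at most one. -/
noncomputable def hermiteMajorant (v x : V) : ℝ :=
  1 / 2 + 2 / 3 * inner ℝ v x ^ 2 + 1 / 6 * inner ℝ v x ^ 4

theorem norm_lineDerivOp_three_gaussianSchwartz_le {a b c : V} (ha : ‖a‖ ≤ 1) (hb : ‖b‖ ≤ 1)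
    (hc : ‖c‖ ≤ 1) (x : V) :
    ‖∂_{c} (∂_{b} (∂_{a} (gaussianSchwartz V))) x‖ ≤
      (hermiteMajorant a x + hermiteMajorant b x + hermiteMajorant c x) *
        gaussianSchwartz V x := by
  have hinner : ∀ {v w : V}, ‖v‖ ≤ 1 → ‖w‖ ≤ 1 → ∀ p : ℝ, |inner ℝ v w * p| ≤ (1 + p ^ 2) / 2 :=
    fun {v w} hv hw p => by
      rw [abs_mul]
      exact (mul_le_of_le_one_left (abs_nonneg p) ((abs_real_inner_le_norm v w).trans
        (mul_le_one₀ hv (norm_nonneg w) hw))).trans (abs_le_one_add_sq_div_two p)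
  have hγ : 0 ≤ gaussianSchwartz V x := (exp_pos _).le
  rw [lineDerivOp_lineDerivOp_lineDerivOp_gaussianSchwartz, norm_mul, norm_of_nonneg hγ]
  gcongr
  set p := inner ℝ a x
  set q := inner ℝ b x
  set r := inner ℝ c x
  calc ‖inner ℝ a c * q + inner ℝ b c * p + inner ℝ a b * r - p * q * r‖
      ≤ |inner ℝ a c * q| + |inner ℝ b c * p| + |inner ℝ a b * r| + |p * q * r| :=
        (abs_sub _ _).trans (by gcongr; exact abs_add_three _ _ _)
    _ ≤ (1 + q ^ 2) / 2 + (1 + p ^ 2) / 2 + (1 + r ^ 2) / 2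
          + ((p ^ 2 + p ^ 4) / 6 + (q ^ 2 + q ^ 4) / 6 + (r ^ 2 + r ^ 4) / 6) := by
        gcongr
        · exact hinner ha hc q
        · exact hinner hb hc p
        · exact hinner ha hb r
        · exact abs_mul_mul_le p q r
    _ = hermiteMajorant a x + hermiteMajorant b x + hermiteMajorant c x := by
        unfold hermiteMajorant
        ring

theorem exists_norm_le_one_eq_norm_smul (v : V) : ∃ w : V, ‖w‖ ≤ 1 ∧ v = ‖v‖ • w := by
  refine ⟨‖v‖⁻¹ • v, ?_, ?_⟩
  · rw [norm_smul, norm_inv, norm_norm]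
    exact inv_mul_le_one
  · rcases eq_or_ne v 0 with rfl | hv
    · simp
    · rw [smul_inv_smul₀ (norm_ne_zero_iff.2 hv)]

variable [FiniteDimensional ℝ V] [MeasurableSpace V] [BorelSpace V]
  (μ : Measure V) [μ.IsAddHaarMeasure]

theorem integrable_mul_gaussianSchwartz {p : V → ℝ} (hp : p.HasTemperateGrowth) :
    Integrable (fun x => p x * gaussianSchwartz V x) μ := by
  simpa only [smulLeftCLM_apply hp, smul_eq_mul] using
    (smulLeftCLM ℝ p (gaussianSchwartz V)).integrable (μ := μ)

theorem integrable_inner_pow_mul_gaussianSchwartz (a : V) (n : ℕ) :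
    Integrable (fun x => inner ℝ a x ^ n * gaussianSchwartz V x) μ :=
  integrable_mul_gaussianSchwartz μ ((Function.hasTemperateGrowth_inner_right a).pow n)

theorem integral_inner_pow_add_two_mul_gaussianSchwartz (a : V) (n : ℕ) :
    ∫ x, inner ℝ a x ^ (n + 2) * gaussianSchwartz V x ∂μ =
      (n + 1) * ‖a‖ ^ 2 * ∫ x, inner ℝ a x ^ n * gaussianSchwartz V x ∂μ := by
  have hpow : ∀ x, HasFDerivAt (fun x => inner ℝ a x ^ (n + 1))
      (((n + 1) * inner ℝ a x ^ n) • innerSL ℝ a) x := fun x => by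
    simpa using (hasFDerivAt_inner_right a x).pow (n + 1)
  have hf : ∀ x, fderiv ℝ (fun x => inner ℝ a x ^ (n + 1)) x a * gaussianSchwartz V x =
      (n + 1) * ‖a‖ ^ 2 * (inner ℝ a x ^ n * gaussianSchwartz V x) := fun x => by
    rw [(hpow x).fderiv, smul_apply, innerSL_apply_apply, real_inner_self_eq_norm_sq, smul_eq_mul]
    ring
  have hg : ∀ x, inner ℝ a x ^ (n + 1) * fderiv ℝ (gaussianSchwartz V) x a =
      -(inner ℝ a x ^ (n + 2) * gaussianSchwartz V x) := fun x => by
    rw [← lineDerivOp_apply_eq_fderiv, lineDerivOp_gaussianSchwartz]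
    ring
  have hparts := integral_mul_fderiv_eq_neg_fderiv_mul_of_integrable (μ := μ) (v := a)
    (f := fun x => inner ℝ a x ^ (n + 1)) (g := gaussianSchwartz V)
    (by simpa only [hf] using
      (integrable_inner_pow_mul_gaussianSchwartz μ a n).const_mul ((n + 1) * ‖a‖ ^ 2))
    (by simpa only [hg] using (integrable_inner_pow_mul_gaussianSchwartz μ a (n + 2)).fun_neg)
    (integrable_inner_pow_mul_gaussianSchwartz μ a (n + 1))
    (fun x _ => (hpow x).differentiableAt) (fun x _ => (gaussianSchwartz V).differentiableAt)
  simpa only [hf, hg, integral_neg, integral_const_mul, neg_inj] using hparts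

theorem integral_inner_sq_mul_gaussianSchwartz (a : V) :
    ∫ x, inner ℝ a x ^ 2 * gaussianSchwartz V x ∂μ =
      ‖a‖ ^ 2 * ∫ x, gaussianSchwartz V x ∂μ := by
  simpa using integral_inner_pow_add_two_mul_gaussianSchwartz μ a 0

theorem integral_inner_pow_four_mul_gaussianSchwartz (a : V) :
    ∫ x, inner ℝ a x ^ 4 * gaussianSchwartz V x ∂μ =
      3 * ‖a‖ ^ 4 * ∫ x, gaussianSchwartz V x ∂μ := by
  rw [integral_inner_pow_add_two_mul_gaussianSchwartz μ a 2,
    integral_inner_sq_mul_gaussianSchwartz]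
  push_cast
  ring

theorem integrable_hermiteMajorant_mul_gaussianSchwartz (v : V) :
    Integrable (fun x => hermiteMajorant v x * gaussianSchwartz V x) μ :=
  integrable_mul_gaussianSchwartz μ (by unfold hermiteMajorant; fun_prop)

theorem integral_hermiteMajorant_mul_gaussianSchwartz_le {v : V} (hv : ‖v‖ ≤ 1) :
    ∫ x, hermiteMajorant v x * gaussianSchwartz V x ∂μ ≤
      5 / 3 * ∫ x, gaussianSchwartz V x ∂μ := by
  have hγ : 0 ≤ ∫ x, gaussianSchwartz V x ∂μ := integral_nonneg fun x => (exp_pos _).le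
  have h2 := integrable_inner_pow_mul_gaussianSchwartz μ v 2
  have h4 := integrable_inner_pow_mul_gaussianSchwartz μ v 4
  calc ∫ x, hermiteMajorant v x * gaussianSchwartz V x ∂μ
      = 1 / 2 * ∫ x, gaussianSchwartz V x ∂μ
          + 2 / 3 * (‖v‖ ^ 2 * ∫ x, gaussianSchwartz V x ∂μ)
          + 1 / 6 * (3 * ‖v‖ ^ 4 * ∫ x, gaussianSchwartz V x ∂μ) := by
        rw [← integral_inner_sq_mul_gaussianSchwartz,
          ← integral_inner_pow_four_mul_gaussianSchwartz, ← integral_const_mul,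
          ← integral_const_mul, ← integral_const_mul, ← integral_add, ← integral_add]
        · simp only [hermiteMajorant, add_mul, mul_assoc]
        · exact ((gaussianSchwartz V).integrable.const_mul _).add (h2.const_mul _)
        · exact h4.const_mul _
        · exact (gaussianSchwartz V).integrable.const_mul _
        · exact h2.const_mul _
    _ ≤ 5 / 3 * ∫ x, gaussianSchwartz V x ∂μ := by
        have hv2 : ‖v‖ ^ 2 ≤ 1 := pow_le_one₀ (norm_nonneg v) hv
        have hv4 : ‖v‖ ^ 4 ≤ 1 := pow_le_one₀ (norm_nonneg v) hv
        nlinarith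

theorem integral_norm_lineDerivOp_three_gaussianSchwartz_le_of_norm_le_one {a b c : V}
    (ha : ‖a‖ ≤ 1) (hb : ‖b‖ ≤ 1) (hc : ‖c‖ ≤ 1) :
    ∫ x, ‖∂_{c} (∂_{b} (∂_{a} (gaussianSchwartz V))) x‖ ∂μ ≤
      5 * ∫ x, gaussianSchwartz V x ∂μ := by
  have hint := integrable_hermiteMajorant_mul_gaussianSchwartz (V := V) μ
  calc ∫ x, ‖∂_{c} (∂_{b} (∂_{a} (gaussianSchwartz V))) x‖ ∂μ
      ≤ ∫ x, (hermiteMajorant a x * gaussianSchwartz V x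
          + hermiteMajorant b x * gaussianSchwartz V x
          + hermiteMajorant c x * gaussianSchwartz V x) ∂μ := by
        refine integral_mono (SchwartzMap.integrable _).norm
          (((hint a).add (hint b)).add (hint c)) fun x => ?_
        simpa only [add_mul] using norm_lineDerivOp_three_gaussianSchwartz_le ha hb hc x
    _ ≤ 5 / 3 * (∫ x, gaussianSchwartz V x ∂μ) + 5 / 3 * (∫ x, gaussianSchwartz V x ∂μ)
          + 5 / 3 * ∫ x, gaussianSchwartz V x ∂μ := by
        rw [integral_add ((hint a).fun_add (hint b)) (hint c), integral_add (hint a) (hint b)]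
        gcongr <;> exact integral_hermiteMajorant_mul_gaussianSchwartz_le μ ‹_›
    _ = 5 * ∫ x, gaussianSchwartz V x ∂μ := by ring

theorem integral_norm_lineDerivOp_three_gaussianSchwartz_le (a b c : V) :
    ∫ x, ‖∂_{c} (∂_{b} (∂_{a} (gaussianSchwartz V))) x‖ ∂μ ≤
      5 * ‖a‖ * ‖b‖ * ‖c‖ * ∫ x, gaussianSchwartz V x ∂μ := by
  obtain ⟨a', ha', ha⟩ := exists_norm_le_one_eq_norm_smul a
  obtain ⟨b', hb', hb⟩ := exists_norm_le_one_eq_norm_smul b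
  obtain ⟨c', hc', hc⟩ := exists_norm_le_one_eq_norm_smul c
  have hscale : ∀ x, ‖∂_{c} (∂_{b} (∂_{a} (gaussianSchwartz V))) x‖ =
      ‖a‖ * ‖b‖ * ‖c‖ * ‖∂_{c'} (∂_{b'} (∂_{a'} (gaussianSchwartz V))) x‖ := fun x => by
    conv_lhs => rw [ha, hb, hc]
    simp only [lineDerivOp_left_smul, lineDerivOp_smul, smul_apply, norm_smul, norm_norm]
    ring
  calc ∫ x, ‖∂_{c} (∂_{b} (∂_{a} (gaussianSchwartz V))) x‖ ∂μ
      = ‖a‖ * ‖b‖ * ‖c‖ * ∫ x, ‖∂_{c'} (∂_{b'} (∂_{a'} (gaussianSchwartz V))) x‖ ∂μ := by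
        simp only [hscale, integral_const_mul]
    _ ≤ ‖a‖ * ‖b‖ * ‖c‖ * (5 * ∫ x, gaussianSchwartz V x ∂μ) := by
        gcongr
        exact integral_norm_lineDerivOp_three_gaussianSchwartz_le_of_norm_le_one μ ha' hb' hc'
    _ = 5 * ‖a‖ * ‖b‖ * ‖c‖ * ∫ x, gaussianSchwartz V x ∂μ := by ring

end Gaussian

section Whitening

variable {E V : Type*} [NormedAddCommGroup E] [NormedSpace ℝ E] [FiniteDimensional ℝ E]
  [MeasurableSpace E] [BorelSpace E] [NormedAddCommGroup V] [InnerProductSpace ℝ V]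

theorem integral_norm_lineDerivOp_three_gaussianSchwartz_comp_le (μ : Measure E)
    [μ.IsAddHaarMeasure] (B : E ≃L[ℝ] V) (u v w : E) :
    ∫ x, ‖∂_{w} (∂_{v} (∂_{u}
        (compCLMOfContinuousLinearEquiv ℝ B (gaussianSchwartz V)))) x‖ ∂μ ≤
      5 * ‖B u‖ * ‖B v‖ * ‖B w‖ * ∫ x, gaussianSchwartz V (B x) ∂μ := by
  borelize V
  have : FiniteDimensional ℝ V := B.toLinearEquiv.finiteDimensional
  have : (μ.map B).IsAddHaarMeasure := B.isAddHaarMeasure_map μ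
  have hmap : ∀ g : V → ℝ, ∫ x, g (B x) ∂μ = ∫ y, g y ∂(μ.map B) := fun g =>
    (B.toHomeomorph.measurableEmbedding.integral_map g).symm
  simp only [lineDerivOp_compCLMOfContinuousLinearEquiv, compCLMOfContinuousLinearEquiv_apply,
    Function.comp_apply]
  rw [hmap fun y => ‖∂_{B w} (∂_{B v} (∂_{B u} (gaussianSchwartz V))) y‖, hmap]
  exact integral_norm_lineDerivOp_three_gaussianSchwartz_le (μ.map B) (B u) (B v) (B w)

theorem integral_gaussianSchwartz_comp_equiv {V : Type*} [NormedAddCommGroup V]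
    [InnerProductSpace ℝ V] [FiniteDimensional ℝ V] [MeasurableSpace V] [BorelSpace V]
    (B : V ≃L[ℝ] V) :
    ∫ x, gaussianSchwartz V (B x) =
      |LinearMap.det (B : V →ₗ[ℝ] V)|⁻¹ * (2 * π) ^ ((finrank ℝ V : ℝ) / 2) := by
  have hgauss : ∫ x, gaussianSchwartz V x = (2 * π) ^ ((finrank ℝ V : ℝ) / 2) := by
    have hexp : ∀ x, gaussianSchwartz V x = rexp (-(1 / 2) * ‖x‖ ^ 2) := fun x => by
      rw [gaussianSchwartz_apply]
      ring_nf
    simp only [hexp, GaussianFourier.integral_rexp_neg_mul_sq_norm one_half_pos]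
    ring_nf
  have hdet : LinearMap.det (B : V →ₗ[ℝ] V) ≠ 0 :=
    (LinearEquiv.isUnit_det' B.toLinearEquiv).ne_zero
  have hmap : volume.map B.toHomeomorph = _ :=
    Measure.map_linearMap_addHaar_eq_smul_addHaar volume hdet
  calc ∫ x, gaussianSchwartz V (B x) = ∫ y, gaussianSchwartz V y ∂(volume.map B.toHomeomorph) :=
        (B.toHomeomorph.measurableEmbedding.integral_map _).symm
    _ = |LinearMap.det (B : V →ₗ[ℝ] V)|⁻¹ * (2 * π) ^ ((finrank ℝ V : ℝ) / 2) := by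
        rw [hmap, integral_smul_measure, hgauss, ENNReal.toReal_ofReal (abs_nonneg _), abs_inv,
          smul_eq_mul]

open scoped MatrixOrder Matrix.Norms.L2Operator in
theorem exists_equiv_norm_sq_eq_inner {ι : Type*} [Fintype ι] [DecidableEq ι]
    {P : Matrix ι ι ℝ} (hP : P.PosDef) :
    ∃ B : EuclideanSpace ℝ ι ≃L[ℝ] EuclideanSpace ℝ ι,
      (∀ x, ‖B x‖ ^ 2 = inner ℝ x (Matrix.toEuclideanCLM (𝕜 := ℝ) P x)) ∧
        LinearMap.det (B : EuclideanSpace ℝ ι →ₗ[ℝ] EuclideanSpace ℝ ι) ^ 2 = P.det := by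
  obtain ⟨A, hA, hPA⟩ :=
    CStarAlgebra.isStrictlyPositive_iff_eq_star_mul_self.1 hP.isStrictlyPositive
  let B := ContinuousLinearEquiv.unitsEquiv ℝ _ (hA.map (Matrix.toEuclideanCLM (𝕜 := ℝ))).unit
  have hB : (B : EuclideanSpace ℝ ι →L[ℝ] _) = Matrix.toEuclideanCLM (𝕜 := ℝ) A := rfl
  refine ⟨B, fun x => ?_, ?_⟩
  · rw [hPA, map_mul, map_star, ← hB, ContinuousLinearMap.star_eq_adjoint, mul_apply_eq_comp,
      ContinuousLinearMap.adjoint_inner_right, real_inner_self_eq_norm_sq]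
    rfl
  · have hdet : LinearMap.det (B : EuclideanSpace ℝ ι →ₗ[ℝ] EuclideanSpace ℝ ι) = A.det :=
      LinearMap.det_toLpLin _ _
    rw [hdet, hPA, Matrix.det_mul, Matrix.star_eq_conjTranspose, Matrix.det_conjTranspose,
      star_trivial, sq]

theorem norm_le_norm_rpow_half_mul {E V : Type*} [NormedAddCommGroup E] [InnerProductSpace ℝ E]
    [NormedAddCommGroup V] {B : E → V} {P : E →L[ℝ] E}
    (hB : ∀ x, ‖B x‖ ^ 2 = inner ℝ x (P x)) (x : E) :
    ‖B x‖ ≤ ‖P‖ ^ (1 / 2 : ℝ) * ‖x‖ := by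
  rw [← sqrt_eq_rpow]
  refine (sq_le_sq₀ (norm_nonneg _) (by positivity)).1 ?_
  calc ‖B x‖ ^ 2 = inner ℝ x (P x) := hB x
    _ ≤ ‖x‖ * ‖P x‖ := real_inner_le_norm x (P x)
    _ ≤ ‖x‖ * (‖P‖ * ‖x‖) := by
        gcongr
        exact P.le_opNorm x
    _ = (√‖P‖ * ‖x‖) ^ 2 := by
        rw [mul_pow, sq_sqrt (norm_nonneg P)]
        ring

end Whitening

section GaussianDensity

variable {m : ℕ} {S : Matrix (Fin m) (Fin m) ℝ}

theorem gaussianDensityMat_eq_mul_exp_inner (S : Matrix (Fin m) (Fin m) ℝ)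
    (z : EuclideanSpace ℝ (Fin m)) :
    gaussianDensityMat m S z = (2 * π) ^ (-(m : ℝ) / 2) * S.det ^ (-(1 : ℝ) / 2) *
      rexp (-inner ℝ z (Matrix.toEuclideanCLM (𝕜 := ℝ) S⁻¹ z) / 2) := by
  rw [gaussianDensityMat, Matrix.inner_toEuclideanCLM]
  simp only [dotProduct, Matrix.mulVec, Finset.mul_sum]
  congr! 6 with k _ l _
  ring

theorem two_pi_rpow_mul_det_rpow_mul_eq_one (hS : S.PosDef) {d : ℝ} (hd : d ^ 2 = S⁻¹.det) :
    (2 * π) ^ (-(m : ℝ) / 2) * S.det ^ (-(1 : ℝ) / 2) * (|d|⁻¹ * (2 * π) ^ ((m : ℝ) / 2)) = 1 := by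
  have hdet : S.det ^ (-(1 : ℝ) / 2) = |d| := by
    rw [neg_div, rpow_neg hS.det_pos.le, ← sqrt_eq_rpow, ← sqrt_inv, ← Ring.inverse_eq_inv',
      ← Matrix.det_nonsing_inv, ← hd, sqrt_sq_eq_abs]
  have hd0 : |d| ≠ 0 := by
    rw [← hdet]
    exact (rpow_pos_of_pos hS.det_pos _).ne'
  have hpi : (2 * π) ^ ((m : ℝ) / 2) ≠ 0 := (rpow_pos_of_pos two_pi_pos _).ne'
  rw [hdet, neg_div, rpow_neg two_pi_pos.le]
  field_simp

theorem exists_gaussianDensityMat_eq_gaussianSchwartz_comp (hS : S.PosDef) :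
    ∃ (C : ℝ) (B : EuclideanSpace ℝ (Fin m) ≃L[ℝ] EuclideanSpace ℝ (Fin m)),
      (∀ z, ‖B z‖ ^ 2 = inner ℝ z (Matrix.toEuclideanCLM (𝕜 := ℝ) S⁻¹ z)) ∧
      (gaussianDensityMat m S =
        C • compCLMOfContinuousLinearEquiv ℝ B (gaussianSchwartz (EuclideanSpace ℝ (Fin m)))) ∧
      0 ≤ C ∧ C * ∫ z, gaussianSchwartz (EuclideanSpace ℝ (Fin m)) (B z) = 1 := by
  obtain ⟨B, hB, hdet⟩ := exists_equiv_norm_sq_eq_inner hS.inv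
  refine ⟨(2 * π) ^ (-(m : ℝ) / 2) * S.det ^ (-(1 : ℝ) / 2), B, hB, funext fun z => ?_, ?_, ?_⟩
  · rw [gaussianDensityMat_eq_mul_exp_inner, ← hB]
    rfl
  · have := hS.det_pos
    positivity
  · rw [integral_gaussianSchwartz_comp_equiv, finrank_euclideanSpace_fin]
    exact two_pi_rpow_mul_det_rpow_mul_eq_one hS hdet

theorem exists_schwartzMap_eq_gaussianDensityMat (hS : S.PosDef) :
    ∃ φ : 𝓢(EuclideanSpace ℝ (Fin m), ℝ), φ = gaussianDensityMat m S ∧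
      ∀ u v w : EuclideanSpace ℝ (Fin m), ∫ z, ‖∂_{w} (∂_{v} (∂_{u} φ)) z‖ ≤
        5 * ‖u‖ * ‖v‖ * ‖w‖ * ‖Matrix.toEuclideanCLM (𝕜 := ℝ) S⁻¹‖ ^ (3 / 2 : ℝ) := by
  obtain ⟨C, B, hB, hφ, hC, hCint⟩ := exists_gaussianDensityMat_eq_gaussianSchwartz_comp hS
  set φ := compCLMOfContinuousLinearEquiv ℝ B (gaussianSchwartz (EuclideanSpace ℝ (Fin m)))
  set K := ‖Matrix.toEuclideanCLM (𝕜 := ℝ) S⁻¹‖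
  have hBK : ∀ z, ‖B z‖ ≤ K ^ (1 / 2 : ℝ) * ‖z‖ := norm_le_norm_rpow_half_mul hB
  have hK : K ^ (3 / 2 : ℝ) = (K ^ (1 / 2 : ℝ)) ^ 3 := by
    rw [← rpow_natCast, ← rpow_mul (x := K) (norm_nonneg _)]
    norm_num
  refine ⟨C • φ, hφ.symm, fun u v w => ?_⟩
  calc ∫ z, ‖∂_{w} (∂_{v} (∂_{u} (C • φ))) z‖
      = C * ∫ z, ‖∂_{w} (∂_{v} (∂_{u} φ)) z‖ := by
        simp only [lineDerivOp_smul, smul_apply, norm_smul, norm_of_nonneg hC, integral_const_mul]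
    _ ≤ C * (5 * ‖B u‖ * ‖B v‖ * ‖B w‖ *
          ∫ z, gaussianSchwartz (EuclideanSpace ℝ (Fin m)) (B z)) := by
        gcongr
        exact integral_norm_lineDerivOp_three_gaussianSchwartz_comp_le volume B u v w
    _ = 5 * ‖B u‖ * ‖B v‖ * ‖B w‖ := by linear_combination 5 * ‖B u‖ * ‖B v‖ * ‖B w‖ * hCint
    _ ≤ 5 * (K ^ (1 / 2 : ℝ) * ‖u‖) * (K ^ (1 / 2 : ℝ) * ‖v‖) * (K ^ (1 / 2 : ℝ) * ‖w‖) := by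
        gcongr <;> exact hBK _
    _ = 5 * ‖u‖ * ‖v‖ * ‖w‖ * K ^ (3 / 2 : ℝ) := by
        rw [hK]
        ring

end GaussianDensity

section SteinSolution

variable {m : ℕ} {S : Matrix (Fin m) (Fin m) ℝ} {h : EuclideanSpace ℝ (Fin m) → ℝ} {M t : ℝ}
  {φ : 𝓢(EuclideanSpace ℝ (Fin m), ℝ)}

theorem steinSol_eq_steinIntegral (hh : Measurable h) (hM : ∀ z, |h z| ≤ M) (ht1 : t ≤ 1)
    (hφ : φ = gaussianDensityMat m S) :
    steinSol m t h S =
      (1 / 2 : ℝ) • steinIntegral volume t 0 h (∫ z, h z • φ z) φ := by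
  have hinner : ∀ s y, ∫ z, (h (√s • z + √(1 - s) • y) - h z) * φ z =
      mehlerAverage volume h φ s y - ∫ z, h z • φ z := fun s y => by
    simp only [sub_mul]
    exact integral_sub
      (φ.integrable.bdd_smul M (hh.comp (by fun_prop)).aestronglyMeasurable
        (ae_of_all _ fun z => hM _))
      (φ.integrable.bdd_smul M hh.aestronglyMeasurable (ae_of_all _ hM))
  funext y
  simp only [steinSol, Pi.smul_apply, steinIntegral, ← hφ, hinner,
    intervalIntegral.integral_of_le ht1, steinWeight, pow_zero, mul_one, smul_eq_mul]

theorem fderiv_fderiv_fderiv_steinSol_apply (hh : Measurable h) (hM : ∀ z, |h z| ≤ M)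
    (ht : 0 < t) (ht1 : t ≤ 1) (hφ : φ = gaussianDensityMat m S)
    (u v w y : EuclideanSpace ℝ (Fin m)) :
    fderiv ℝ (fun y₁ => fderiv ℝ (fun y₂ => fderiv ℝ (steinSol m t h S) y₂ u) y₁ v) y w =
      -(1 / 2) * steinIntegral volume t 3 h 0 (∂_{w} (∂_{v} (∂_{u} φ))) y := by
  have hzero : (fun y => fderiv ℝ (steinSol m t h S) y u) =
      (-(1 / 2 : ℝ)) • steinIntegral volume t 1 h 0 (∂_{u} φ) := funext fun y => by
    rw [steinSol_eq_steinIntegral hh hM ht1 hφ, fderiv_const_smul_field, Pi.smul_apply,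
      smul_apply, fderiv_steinIntegral_apply volume hh hM ht ht1 φ _
        (integrableOn_steinWeight_zero_smul volume hh hM ht ht1 φ y) u]
    simp only [Pi.smul_apply, smul_neg, neg_smul]
  have hsucc : ∀ (c : ℝ) (n : ℕ) (ψ : 𝓢(EuclideanSpace ℝ (Fin m), ℝ))
      (v : EuclideanSpace ℝ (Fin m)),
      (fun y => fderiv ℝ (c • steinIntegral volume t (n + 1) h 0 ψ) y v) =
        (-c) • steinIntegral volume t (n + 2) h 0 (∂_{v} ψ) := fun c n ψ v => funext fun y => by
    rw [fderiv_const_smul_field, Pi.smul_apply, smul_apply,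
      fderiv_steinIntegral_apply volume hh hM ht ht1 ψ 0
        (integrableOn_steinWeight_succ_smul volume hh hM ht ht1 ψ n y) v]
    simp only [Pi.smul_apply, smul_neg, neg_smul]
  rw [hzero, hsucc]
  refine (congr_fun (hsucc _ 1 _ w) y).trans ?_
  rw [neg_neg, Pi.smul_apply, smul_eq_mul]

end SteinSolution

end SteinSmoothing

theorem stmt18_general (m : ℕ) (h : EuclideanSpace ℝ (Fin m) → ℝ) (hmeas : Measurable h)
    (M : ℝ) (hbd : ∀ y, |h y| ≤ M) (S : Matrix (Fin m) (Fin m) ℝ) (hS : S.PosDef)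
    (t : ℝ) (ht0 : 0 < t) (ht1 : t ≤ 1) (u v w y : EuclideanSpace ℝ (Fin m)) :
    |fderiv ℝ (fun y₁ => fderiv ℝ (fun y₂ => fderiv ℝ (steinSol m t h S) y₂ u) y₁ v) y w| ≤
      5 * M * ‖u‖ * ‖v‖ * ‖w‖ * ‖Matrix.toEuclideanCLM (𝕜 := ℝ) S⁻¹‖ ^ ((3 : ℝ) / 2) / √t := by
  obtain ⟨φ, hφ, hφint⟩ := SteinSmoothing.exists_schwartzMap_eq_gaussianDensityMat hS
  have hM : 0 ≤ M := (abs_nonneg _).trans (hbd 0)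
  rw [SteinSmoothing.fderiv_fderiv_fderiv_steinSol_apply hmeas hbd ht0 ht1 hφ, abs_mul, abs_neg,
    abs_of_pos one_half_pos]
  calc 1 / 2 * |SteinSmoothing.steinIntegral volume t 3 h 0 (∂_{w} (∂_{v} (∂_{u} φ))) y|
      ≤ 1 / 2 * (2 / √t * (M * ∫ z, ‖∂_{w} (∂_{v} (∂_{u} φ)) z‖)) := by
        gcongr
        exact SteinSmoothing.norm_steinIntegral_three_le (F := ℝ) volume hbd ht0 ht1 _ y
    _ ≤ 1 / 2 * (2 / √t * (M * (5 * ‖u‖ * ‖v‖ * ‖w‖ *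
          ‖Matrix.toEuclideanCLM (𝕜 := ℝ) S⁻¹‖ ^ ((3 : ℝ) / 2)))) := by
        gcongr
        exact hφint u v w
    _ = 5 * M * ‖u‖ * ‖v‖ * ‖w‖ *
          ‖Matrix.toEuclideanCLM (𝕜 := ℝ) S⁻¹‖ ^ ((3 : ℝ) / 2) / √t := by ring

/-- For measurable `h : ℝ^m → ℝ` with `‖h‖_∞ ≤ 1`, positive definite `Σ` and `t ∈ (0,1)`,
all third partial derivatives of `f_{t,h,Σ}` are bounded by
`6 m³ ‖Σ⁻¹‖_op^{3/2} / √t`. -/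
theorem stmt18 (m : ℕ) (h : EuclideanSpace ℝ (Fin m) → ℝ) (hmeas : Measurable h)
    (hbd : ∀ y, |h y| ≤ 1) (S : Matrix (Fin m) (Fin m) ℝ) (hS : S.PosDef)
    (t : ℝ) (ht0 : 0 < t) (ht1 : t < 1) (i j k : Fin m) (y : EuclideanSpace ℝ (Fin m)) :
    |fderiv ℝ (fun y1 => fderiv ℝ (fun y2 => fderiv ℝ (steinSol m t h S) y2
        (EuclideanSpace.single i 1)) y1 (EuclideanSpace.single j 1)) y
      (EuclideanSpace.single k 1)| ≤
      6 * m ^ 3 * ‖Matrix.toEuclideanCLM (𝕜 := ℝ) S⁻¹‖ ^ ((3 : ℝ) / 2) / Real.sqrt t := by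
  have hm : (1 : ℝ) ≤ m := by exact_mod_cast i.pos
  refine (stmt18_general m h hmeas 1 hbd S hS t ht0 ht1.le _ _ _ y).trans ?_
  simp only [PiLp.norm_single, norm_one, mul_one]
  gcongr
  linarith [one_le_pow₀ (n := 3) hm]
end
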